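/- arXiv:2301.05153 — 3 statements merged into one kernel-verified Lean document; each statement's English description precedes it below -/
import Mathlib

section
/- Fix i ∈ {0,…,e−1}. Let B be a block of multipartitions of n with core block C such that w(B) ≤ w(C) + K_i(C)·r and δ_i(B) ≥ 0. If λ and μ are multipartitions in B with λ > μ in the lexicographic order, then Φ_i(λ) > Φ_i(μ) in the lexicographic order; that is, Φ_i preserves the lexicographic order of multipartitions in B. -/
/-!
Combinatorial framework for multipartitions, residues, β-sets, abacus levels,
weights, hubs, core blocks and Scopes-type moves, following Fayers and the paper.
Rows and columns of Young diagrams are indexed from 0, so the node in row `b`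
and column `c` (0-based) of component `j` has residue `a j + c - b` mod `e`.
-/

open scoped Classical

namespace AK

/-- A partition, given by its (antitone, finitely supported) sequence of parts,
rows indexed from `0`. -/
structure PartitionFun : Type where
  part : ℕ → ℕ
  antitone : Antitone part
  finite_support : ∃ N, ∀ b, N ≤ b → part b = 0

/-- The node in row `b`, column `c` (0-based) belongs to the Young diagram. -/
def PartitionFun.InDiag (lam : PartitionFun) (b c : ℕ) : Prop := c < lam.part b

/-- The node `(b,c)` is removable: deleting it leaves the diagram of a partition. -/
def PartitionFun.Removable (lam : PartitionFun) (b c : ℕ) : Prop :=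
  lam.part b = c + 1 ∧ lam.part (b + 1) ≤ c

/-- The node `(b,c)` is addable: adjoining it gives the diagram of a partition. -/
def PartitionFun.Addable (lam : PartitionFun) (b c : ℕ) : Prop :=
  lam.part b = c ∧ (b = 0 ∨ lam.part b < lam.part (b - 1))

/-- An `r`-multipartition. -/
abbrev Multipartition (r : ℕ) := Fin r → PartitionFun

/-- Nodes: `(b, c, j)` with row `b`, column `c`, component `j`. -/
abbrev Node (r : ℕ) := ℕ × ℕ × Fin r

/-- The Young diagram of a multipartition, as a set of nodes. -/
def diag {r : ℕ} (lam : Multipartition r) : Set (Node r) :=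
  {x | (lam x.2.2).InDiag x.1 x.2.1}

/-- The size `n` of a multipartition of `n`. -/
noncomputable def msize {r : ℕ} (lam : Multipartition r) : ℕ :=
  Set.ncard (diag lam)

/-- `c_i(λ)`: the number of nodes of residue `i` (mod `e`). -/
noncomputable def nodeCount {r : ℕ} (e : ℕ) (a : Fin r → ℤ) (lam : Multipartition r)
    (i : ℤ) : ℕ :=
  Set.ncard {x : Node r | (lam x.2.2).InDiag x.1 x.2.1 ∧
    (a x.2.2 + (x.2.1 : ℤ) - (x.1 : ℤ)) % (e : ℤ) = i % e}

/-- Number of removable nodes of residue `i` in component `j`. -/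
noncomputable def removableCount {r : ℕ} (e : ℕ) (a : Fin r → ℤ) (lam : Multipartition r)
    (i : ℤ) (j : Fin r) : ℕ :=
  Set.ncard {p : ℕ × ℕ | (lam j).Removable p.1 p.2 ∧
    (a j + (p.2 : ℤ) - (p.1 : ℤ)) % (e : ℤ) = i % e}

/-- Number of addable nodes of residue `i` in component `j`. -/
noncomputable def addableCount {r : ℕ} (e : ℕ) (a : Fin r → ℤ) (lam : Multipartition r)
    (i : ℤ) (j : Fin r) : ℕ :=
  Set.ncard {p : ℕ × ℕ | (lam j).Addable p.1 p.2 ∧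
    (a j + (p.2 : ℤ) - (p.1 : ℤ)) % (e : ℤ) = i % e}

/-- `δ^j_i(λ)` = (removable `i`-nodes of component `j`) − (addable `i`-nodes of component `j`). -/
noncomputable def delta {r : ℕ} (e : ℕ) (a : Fin r → ℤ) (lam : Multipartition r)
    (i : ℤ) (j : Fin r) : ℤ :=
  (removableCount e a lam i j : ℤ) - (addableCount e a lam i j : ℤ)

/-- The hub `δ_i(λ) = Σ_j δ^j_i(λ)`. -/
noncomputable def hub {r : ℕ} (e : ℕ) (a : Fin r → ℤ) (lam : Multipartition r) (i : ℤ) : ℤ :=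
  ∑ j : Fin r, delta e a lam i j

/-- Two multipartitions have the same hub. -/
def SameHub {r : ℕ} (e : ℕ) (a : Fin r → ℤ) (lam mu : Multipartition r) : Prop :=
  ∀ i : ℤ, hub e a lam i = hub e a mu i

/-- `d_i(m) = min { δ^j_i(m) : 1 ≤ j ≤ r }`. -/
noncomputable def dmin {r : ℕ} (e : ℕ) (a : Fin r → ℤ) (lam : Multipartition r) (i : ℤ) : ℤ :=
  sInf {x : ℤ | ∃ j : Fin r, delta e a lam i j = x}

/-- The weight `w(λ) = Σ_j c_{a_j}(λ) − (1/2) Σ_{i∈ℤ/eℤ} (c_i(λ) − c_{i+1}(λ))²`. -/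
noncomputable def weight {r : ℕ} (e : ℕ) (a : Fin r → ℤ) (lam : Multipartition r) : ℚ :=
  (∑ j : Fin r, (nodeCount e a lam (a j) : ℚ)) -
    (1 / 2 : ℚ) * ∑ i ∈ Finset.range e,
      ((nodeCount e a lam (i : ℤ) : ℚ) - (nodeCount e a lam ((i : ℤ) + 1) : ℚ)) ^ 2

/-- The β-set `B^j = {λ_b + a_j − b : b ≥ 1}` (here with rows indexed from 0). -/
def betaSet (aj : ℤ) (lam : PartitionFun) : Set ℤ :=
  {x | ∃ b : ℕ, x = (lam.part b : ℤ) + aj - ((b : ℤ) + 1)}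

/-- A partition is an `e`-core: `β ∈ B` implies `β − e ∈ B`. -/
def IsECore (e : ℕ) (aj : ℤ) (lam : PartitionFun) : Prop :=
  ∀ x ∈ betaSet aj lam, x - (e : ℤ) ∈ betaSet aj lam

/-- A multicore: all components are `e`-cores. -/
def IsMulticore {r : ℕ} (e : ℕ) (a : Fin r → ℤ) (lam : Multipartition r) : Prop :=
  ∀ j, IsECore e (a j) (lam j)

/-- `ℓ^a_{ij}(λ)`: the level of the lowest bead on runner `i`, i.e. the largest `x`
with `x·e + i` in the β-set. -/
noncomputable def level (e : ℕ) (aj : ℤ) (lam : PartitionFun) (i : ℕ) : ℤ :=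
  sSup {x : ℤ | x * (e : ℤ) + (i : ℤ) ∈ betaSet aj lam}

/-- `γ^{jk}_i(λ) = ℓ^a_{ij}(λ) − ℓ^a_{ik}(λ)`. -/
noncomputable def gamma {r : ℕ} (e : ℕ) (a : Fin r → ℤ) (lam : Multipartition r)
    (i : ℕ) (j k : Fin r) : ℤ :=
  level e (a j) (lam j) i - level e (a k) (lam k) i

/-- `γ^{jk}_{il}(λ) = γ^{jk}_i(λ) − γ^{jk}_l(λ)`. -/
noncomputable def gammaD {r : ℕ} (e : ℕ) (a : Fin r → ℤ) (lam : Multipartition r)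
    (i l : ℕ) (j k : Fin r) : ℤ :=
  gamma e a lam i j k - gamma e a lam l j k

/-- Move a bead from runner `i` to runner `l` in the β-set `S`: replace the largest
element of `S` congruent to `i` mod `e` by the smallest integer congruent to `l`
mod `e` not in `S`. -/
noncomputable def moveBead (e : ℕ) (i l : ℕ) (S : Set ℤ) : Set ℤ :=
  insert (sInf {x : ℤ | x % (e : ℤ) = (l : ℤ) % e ∧ x ∉ S})
    (S \ {sSup {x : ℤ | x % (e : ℤ) = (i : ℤ) % e ∧ x ∈ S}})

/-- The effect of `s^{jk}_{il}` on the tuple of β-sets: move a bead from runner `i`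
to runner `l` in component `j`, and from runner `l` to runner `i` in component `k`. -/
noncomputable def swapSets {r : ℕ} (e i l : ℕ) (j k : Fin r) (S : Fin r → Set ℤ) :
    Fin r → Set ℤ :=
  Function.update (Function.update S j (moveBead e i l (S j))) k
    (moveBead e l i (Function.update S j (moveBead e i l (S j)) k))

/-- `m' = s^{jk}_{il}(m)`, expressed via β-sets. -/
def IsSwap {r : ℕ} (e : ℕ) (a : Fin r → ℤ) (i l : ℕ) (j k : Fin r)
    (m m' : Multipartition r) : Prop :=
  ∀ j', betaSet (a j') (m' j') = swapSets e i l j k (fun t => betaSet (a t) (m t)) j'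

/-- `λ` lies in a core block: its weight is minimal among the weights of all
multipartitions with the same hub. -/
def MinimalWeight {r : ℕ} (e : ℕ) (a : Fin r → ℤ) (lam : Multipartition r) : Prop :=
  ∀ mu : Multipartition r, SameHub e a lam mu → weight e a lam ≤ weight e a mu

/-- `(b_0,…,b_{e−1})` is a base tuple for `mu` with respect to the multicharge `a'`
(congruent to `a` componentwise mod `e`): each `ℓ^{a'}_{ij}(mu)` is `b i` or `b i + 1`. -/
def IsBaseTuple {r : ℕ} (e : ℕ) (a : Fin r → ℤ) (mu : Multipartition r)
    (a' : Fin r → ℤ) (b : ℕ → ℤ) : Prop :=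
  (∀ j, (e : ℤ) ∣ (a' j - a j)) ∧
    ∀ i < e, ∀ j, level e (a' j) (mu j) i = b i ∨ level e (a' j) (mu j) i = b i + 1

/-- `K_i(C)` for the core block of `mu`: among all base tuples (over all admissible
multicharges), take `b i` maximal and then `b (i−1)` minimal, and set
`K_i = b_i − b_{i−1} − 1` for `i ≠ 0`, `K_0 = b_0 − b_{e−1} − 2`. -/
noncomputable def Kconst {r : ℕ} (e : ℕ) (a : Fin r → ℤ) (mu : Multipartition r)
    (i : ℕ) : ℤ :=
  let Bi : ℤ := sSup {x : ℤ | ∃ a' bt, IsBaseTuple e a mu a' bt ∧ bt i = x}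
  let iprev : ℕ := if i = 0 then e - 1 else i - 1
  let Bp : ℤ := sInf {x : ℤ | ∃ a' bt, IsBaseTuple e a mu a' bt ∧ bt i = Bi ∧ bt iprev = x}
  Bi - Bp - (if i = 0 then 2 else 1)

/-- The map `φ_i : ℤ → ℤ`. -/
def phiMap (e i : ℕ) (x : ℤ) : ℤ :=
  if x % (e : ℤ) = ((i : ℤ) - 1) % e then x + 1
  else if x % (e : ℤ) = (i : ℤ) % e then x - 1
  else x

/-- Lexicographic order on multipartitions: `λ > μ`. -/
def lexGT {r : ℕ} (lam mu : Multipartition r) : Prop :=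
  ∃ j : Fin r, (∀ j' < j, (lam j').part = (mu j').part) ∧
    ∃ i : ℕ, (∀ i' < i, (lam j).part i' = (mu j).part i') ∧
      (mu j).part i < (lam j).part i

/-- `x` is above `y`: `j < j'` or (`j = j'` and `b < b'`). -/
def NodeAbove {r : ℕ} (x y : Node r) : Prop :=
  x.2.2 < y.2.2 ∨ (x.2.2 = y.2.2 ∧ x.1 < y.1)

/-- The order on nodes: `x < y` iff `y` is above `x`. -/
def NodeLT {r : ℕ} (x y : Node r) : Prop := NodeAbove y x

/-- `N_A(λ)` = (addable `i`-nodes of `λ` below `A`) − (removable `i`-nodes of `λ` below `A`). -/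
noncomputable def Nfac {r : ℕ} (e : ℕ) (a : Fin r → ℤ) (lam : Multipartition r)
    (i : ℤ) (A : Node r) : ℤ :=
  (Set.ncard {y : Node r | (lam y.2.2).Addable y.1 y.2.1 ∧
      (a y.2.2 + (y.2.1 : ℤ) - (y.1 : ℤ)) % (e : ℤ) = i % e ∧ NodeAbove A y} : ℤ) -
  (Set.ncard {y : Node r | (lam y.2.2).Removable y.1 y.2.1 ∧
      (a y.2.2 + (y.2.1 : ℤ) - (y.1 : ℤ)) % (e : ℤ) = i % e ∧ NodeAbove A y} : ℤ)

/-- `lam` is obtained from `mu` by adding one `e`-rim hook to some component: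
on β-sets, some `β ∈ B^j` with `β + e ∉ B^j` is replaced by `β + e`. -/
def AddRimHook {r : ℕ} (e : ℕ) (a : Fin r → ℤ) (mu lam : Multipartition r) : Prop :=
  ∃ (j : Fin r) (β : ℤ), β ∈ betaSet (a j) (mu j) ∧ β + (e : ℤ) ∉ betaSet (a j) (mu j) ∧
    betaSet (a j) (lam j) = insert (β + (e : ℤ)) (betaSet (a j) (mu j) \ {β}) ∧
    ∀ j' ≠ j, betaSet (a j') (lam j') = betaSet (a j') (mu j')

/-- The number of inversions (length) of a permutation of `Fin d`. -/
noncomputable def permLength (d : ℕ) (σ : Equiv.Perm (Fin d)) : ℕ :=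
  (Finset.univ.filter (fun p : Fin d × Fin d => p.1 < p.2 ∧ σ p.2 < σ p.1)).card

/-!
On β-sets the lexicographic order of partitions is the colexicographic order, and the only pairs
inverted by `φ_i` are `{x, x + 1}` with `x + 1` on runner `i`. So `Φ_i` can only break `λ > μ` if
some β-set of `μ` contains such an `x` but not `x + 1`.

Node counts and hub entries are regularised sums over β-sets, of the functions `(x - k) / e` and of
indicators of residue classes respectively. Hence, for a multicore `ν` with the same hub as `μ`, the
difference `c_0(μ) - c_0(ν)` is the difference of the regularised sums of `x / e + f (x % e)` for
any `f`. If `ν` lies in a core block, a base tuple provides an `f` which makes this function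
nonpositive on the β-sets of `ν` and nonnegative off them, up to a constant in each component. All
contributions are then nonnegative, and a pair `x ∈ B`, `x + 1 ∉ B` as above contributes at least
`K_i + 1`. Since `w(μ) - w(ν) = r (c_0(μ) - c_0(ν))`, this contradicts the bound on the weight.
-/

section Colex

variable {α : Type*} [LinearOrder α]

/-- `S` exceeds `T` in the colexicographic order on sets: the largest element of the symmetric
difference exists and lies in `S`. On β-sets this is the lexicographic order of partitions. -/
def ColexGT (S T : Set α) : Prop :=
  ∃ x ∈ S, x ∉ T ∧ ∀ y, x < y → (y ∈ S ↔ y ∈ T)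

lemma ColexGT.asymm {S T : Set α} (hST : ColexGT S T) : ¬ ColexGT T S := by
  rintro ⟨y, hyT, hyS, hy⟩
  obtain ⟨x, hxS, hxT, hx⟩ := hST
  rcases lt_trichotomy x y with hxy | rfl | hyx
  · exact hyS ((hx y hxy).2 hyT)
  · exact hxT hyT
  · exact hxT ((hy x hyx).2 hxS)

lemma colexGT_range_of_toLex_lt {f g : ℕ → α} (hf : StrictAnti f) (hg : StrictAnti g)
    (h : toLex g < toLex f) : ColexGT (Set.range f) (Set.range g) := by
  obtain ⟨k, heq, hlt⟩ := h
  simp only [Pi.toLex_apply] at heq hlt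
  refine ⟨f k, ⟨k, rfl⟩, ?_, fun y hy => ?_⟩
  · rintro ⟨c, hc⟩
    rcases lt_or_ge c k with hck | hkc
    · exact (hf hck).ne' ((heq c hck).symm.trans hc)
    · exact ((hg.antitone hkc).trans_lt hlt).ne hc
  · constructor
    · rintro ⟨c, rfl⟩
      exact ⟨c, heq c (hf.lt_iff_gt.1 hy)⟩
    · rintro ⟨c, rfl⟩
      exact ⟨c, (heq c (hg.lt_iff_gt.1 (hlt.trans hy))).symm⟩

lemma colexGT_range_iff {f g : ℕ → α} (hf : StrictAnti f) (hg : StrictAnti g) :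
    ColexGT (Set.range f) (Set.range g) ↔ toLex g < toLex f := by
  refine ⟨fun h => ?_, colexGT_range_of_toLex_lt hf hg⟩
  rcases lt_trichotomy (toLex g) (toLex f) with hlt | heq | hgt
  · exact hlt
  · rw [toLex_inj.1 heq] at h
    exact (h.asymm h).elim
  · exact (h.asymm (colexGT_range_of_toLex_lt hg hf hgt)).elim

lemma range_inj_of_strictAnti {f g : ℕ → α} (hf : StrictAnti f) (hg : StrictAnti g) :
    Set.range f = Set.range g ↔ f = g :=
  StrictMono.range_inj (γ := αᵒᵈ) hf hg

end Colex

section BetaNumbers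

variable {aj : ℤ} {p q : PartitionFun}

/-- The entry of the β-set contributed by row `b`, rows being indexed from `0`. -/
def betaNumber (aj : ℤ) (p : PartitionFun) (b : ℕ) : ℤ := (p.part b : ℤ) + aj - ((b : ℤ) + 1)

lemma betaSet_eq_range (aj : ℤ) (p : PartitionFun) :
    betaSet aj p = Set.range (betaNumber aj p) :=
  Set.ext fun _ => exists_congr fun _ => eq_comm

lemma betaNumber_strictAnti (aj : ℤ) (p : PartitionFun) : StrictAnti (betaNumber aj p) := by
  intro b c hbc
  have := p.antitone hbc.le
  unfold betaNumber
  omega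

lemma betaSet_eq_iff : betaSet aj p = betaSet aj q ↔ p.part = q.part := by
  rw [betaSet_eq_range, betaSet_eq_range,
    range_inj_of_strictAnti (betaNumber_strictAnti aj p) (betaNumber_strictAnti aj q)]
  simp [funext_iff, betaNumber]

lemma colexGT_betaSet_iff :
    ColexGT (betaSet aj p) (betaSet aj q) ↔ toLex q.part < toLex p.part := by
  rw [betaSet_eq_range, betaSet_eq_range,
    colexGT_range_iff (betaNumber_strictAnti aj p) (betaNumber_strictAnti aj q)]
  refine exists_congr fun k => ?_
  simp [betaNumber]

lemma lexGT_iff_betaSet {r : ℕ} (a : Fin r → ℤ) {lam mu : Multipartition r} :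
    lexGT lam mu ↔ ∃ j, (∀ j' < j, betaSet (a j') (lam j') = betaSet (a j') (mu j')) ∧
      ColexGT (betaSet (a j) (lam j)) (betaSet (a j) (mu j)) := by
  simp only [lexGT, betaSet_eq_iff, colexGT_betaSet_iff]
  refine exists_congr fun j => and_congr_right fun _ => exists_congr fun k =>
    and_congr_left fun _ => forall₂_congr fun _ _ => eq_comm

end BetaNumbers

section PhiMap

variable {e i : ℕ} {x y : ℤ}

lemma add_one_emod_eq_iff {k : ℤ} :
    (x + 1) % (e : ℤ) = k % e ↔ x % (e : ℤ) = (k - 1) % e := by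
  simp only [Int.emod_eq_emod_iff_emod_sub_eq_zero, sub_sub_eq_add_sub]

lemma add_one_emod_ne (he : 2 ≤ e) (x : ℤ) : (x + 1) % (e : ℤ) ≠ x % (e : ℤ) := by
  intro h
  have hdvd : (e : ℤ) ∣ 1 := by simpa using (Int.ModEq.dvd h.symm)
  have := Int.le_of_dvd one_pos hdvd
  omega

lemma phiMap_of_add_one_emod_eq (h : (x + 1) % (e : ℤ) = (i : ℤ) % e) : phiMap e i x = x + 1 :=
  if_pos (add_one_emod_eq_iff.1 h)

lemma phiMap_of_emod_eq (he : 2 ≤ e) (h : x % (e : ℤ) = (i : ℤ) % e) : phiMap e i x = x - 1 := by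
  rw [phiMap, if_neg, if_pos h]
  rw [← add_one_emod_eq_iff, ← h]
  exact add_one_emod_ne he x

lemma phiMap_involutive (he : 2 ≤ e) : Function.Involutive (phiMap e i) := by
  intro x
  by_cases hprev : (x + 1) % (e : ℤ) = (i : ℤ) % e
  · rw [phiMap_of_add_one_emod_eq hprev, phiMap_of_emod_eq he hprev, add_sub_cancel_right]
  by_cases hi : x % (e : ℤ) = (i : ℤ) % e
  · rw [phiMap_of_emod_eq he hi, phiMap_of_add_one_emod_eq (by rwa [sub_add_cancel]),
      sub_add_cancel]
  · have hfix : phiMap e i x = x := by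
      rw [phiMap, if_neg (mt add_one_emod_eq_iff.2 hprev), if_neg hi]
    rw [hfix, hfix]

lemma mem_phiMap_image_iff (he : 2 ≤ e) {S : Set ℤ} :
    x ∈ phiMap e i '' S ↔ phiMap e i x ∈ S := by
  rw [(phiMap_involutive he).image_eq_preimage_symm, Set.mem_preimage]

lemma phiMap_lt_phiMap (he : 2 ≤ e) (hyx : y < x)
    (hswap : ¬ (x % (e : ℤ) = (i : ℤ) % e ∧ y = x - 1)) : phiMap e i y < phiMap e i x := by
  refine lt_of_le_of_ne ?_ fun h => hyx.ne ((phiMap_involutive he).injective h)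
  unfold phiMap
  grind

-- The only inversions of `φ_i` are the pairs `{x - 1, x}` with `x` on runner `i`, and closedness
-- of `T` decides such a pair when `x` is the largest element of the symmetric difference.
lemma ColexGT.phiMap_image (he : 2 ≤ e) {S T : Set ℤ} (hST : ColexGT S T)
    (hT : ∀ y ∈ T, (y + 1) % (e : ℤ) = (i : ℤ) % e → y + 1 ∈ T) :
    ColexGT (phiMap e i '' S) (phiMap e i '' T) := by
  obtain ⟨x, hxS, hxT, hx⟩ := hST
  have hpred : x % (e : ℤ) = (i : ℤ) % e → x - 1 ∉ T := fun hi h =>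
    hxT (by simpa using hT _ h (by simpa using hi))
  have hinv := phiMap_involutive (i := i) he
  by_cases hswap : x % (e : ℤ) = (i : ℤ) % e ∧ x - 1 ∈ S
  · obtain ⟨hi, hS⟩ := hswap
    have hφx := phiMap_of_emod_eq he hi
    refine ⟨x, by rwa [mem_phiMap_image_iff he, hφx],
      by rw [mem_phiMap_image_iff he, hφx]; exact hpred hi, fun z hz => ?_⟩
    rw [mem_phiMap_image_iff he, mem_phiMap_image_iff he]
    refine hx _ (lt_of_not_ge fun hle => ?_)
    have hφx' : phiMap e i (x - 1) = x := by rw [← hφx, hinv]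
    have hne : phiMap e i z ≠ x - 1 := fun h => hz.ne (by rw [← hφx', ← h, hinv])
    rcases hle.eq_or_lt with heq | hlt
    · have := hinv z
      rw [heq, hφx] at this
      omega
    · have := phiMap_lt_phiMap (i := i) he hlt fun h => hne h.2
      rw [hinv, hφx] at this
      omega
  · refine ⟨phiMap e i x, by rwa [mem_phiMap_image_iff he, hinv], by
      rwa [mem_phiMap_image_iff he, hinv], fun z hz => ?_⟩
    rw [mem_phiMap_image_iff he, mem_phiMap_image_iff he]
    have := hinv z
    have := phiMap_lt_phiMap (i := i) (y := phiMap e i z) (x := x) he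
    rcases lt_trichotomy x (phiMap e i z) with h | h | h
    · exact hx _ h
    · grind
    · grind

end PhiMap

section BetaSum

variable {aj : ℤ} {p q : PartitionFun}

/-- The regularised sum `f ↦ ∑_{x ∈ B} f x - ∑_{x < a} f x` over a β-set `B`, where the β-set
`{x | x < a}` of the empty partition serves as the reference. The two sums are paired row by row,
which leaves only finitely many nonzero terms. -/
noncomputable def betaSum (aj : ℤ) (p : PartitionFun) : (ℤ → ℤ) →ₗ[ℤ] ℤ :=
  ∑ᶠ b : ℕ, (LinearMap.proj (R := ℤ) (φ := fun _ => ℤ) (betaNumber aj p b) -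
    LinearMap.proj (aj - (b + 1)))

lemma betaNumber_of_part_eq_zero {b : ℕ} (hb : p.part b = 0) :
    betaNumber aj p b = aj - (b + 1) := by
  simp [betaNumber, hb]

lemma betaSum_eq_sum_range {N : ℕ} (hN : ∀ b, N ≤ b → p.part b = 0) (f : ℤ → ℤ) :
    betaSum aj p f = ∑ b ∈ Finset.range N, (f (betaNumber aj p b) - f (aj - (b + 1))) := by
  rw [betaSum, finsum_eq_sum_of_support_subset (s := Finset.range N)]
  · simp only [LinearMap.sum_apply, LinearMap.sub_apply, LinearMap.proj_apply]
  · intro b hb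
    by_contra hbN
    refine hb ?_
    simp only [betaNumber_of_part_eq_zero (hN b (by simpa using hbN)), sub_self]

@[simp]
lemma betaSum_const (aj : ℤ) (p : PartitionFun) (c : ℤ) : betaSum aj p (fun _ => c) = 0 := by
  obtain ⟨N, hN⟩ := p.finite_support
  simp [betaSum_eq_sum_range hN]

lemma image_betaNumber_sdiff {N : ℕ} (hp : ∀ b, N ≤ b → p.part b = 0)
    (hq : ∀ b, N ≤ b → q.part b = 0) :
    (((Finset.range N).image (betaNumber aj p) \ (Finset.range N).image (betaNumber aj q) :
      Finset ℤ) : Set ℤ) = betaSet aj p \ betaSet aj q := by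
  have htail : ∀ b, N ≤ b → betaNumber aj p b = betaNumber aj q b := fun b hb => by
    rw [betaNumber_of_part_eq_zero (hp b hb), betaNumber_of_part_eq_zero (hq b hb)]
  ext x
  simp only [betaSet_eq_range, Finset.coe_sdiff, Finset.coe_image, Finset.coe_range,
    Set.mem_sdiff, Set.mem_image, Set.mem_Iio, Set.mem_range]
  constructor
  · rintro ⟨⟨b, hb, rfl⟩, hx⟩
    refine ⟨⟨b, rfl⟩, fun ⟨c, hc⟩ => ?_⟩
    rcases lt_or_ge c N with hcN | hNc
    · exact hx ⟨c, hcN, hc⟩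
    · have := (betaNumber_strictAnti aj p).injective ((htail c hNc).trans hc)
      omega
  · rintro ⟨⟨b, rfl⟩, hx⟩
    refine ⟨⟨b, lt_of_not_ge fun hNb => hx ⟨b, (htail b hNb).symm⟩, rfl⟩, ?_⟩
    rintro ⟨c, -, hc⟩
    exact hx ⟨c, hc⟩

lemma exists_forall_part_eq_zero {r : ℕ} (lam : Multipartition r) :
    ∃ N, ∀ j b, N ≤ b → (lam j).part b = 0 := by
  choose N hN using fun j => (lam j).finite_support
  exact ⟨Finset.univ.sup N, fun j b hb =>
    hN j b ((Finset.le_sup (f := N) (Finset.mem_univ j)).trans hb)⟩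

lemma exists_betaSum_sub_eq (aj : ℤ) (p q : PartitionFun) :
    ∃ P Q : Finset ℤ, (P : Set ℤ) = betaSet aj p \ betaSet aj q ∧
      (Q : Set ℤ) = betaSet aj q \ betaSet aj p ∧
      ∀ f, betaSum aj p f - betaSum aj q f = ∑ x ∈ P, f x - ∑ x ∈ Q, f x := by
  obtain ⟨N, hN⟩ := exists_forall_part_eq_zero ![p, q]
  have hp : ∀ b, N ≤ b → p.part b = 0 := hN 0
  have hq : ∀ b, N ≤ b → q.part b = 0 := hN 1
  refine ⟨_, _, image_betaNumber_sdiff hp hq, image_betaNumber_sdiff hq hp, fun f => ?_⟩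
  have himage (s : PartitionFun) : ∑ x ∈ (Finset.range N).image (betaNumber aj s), f x =
      ∑ b ∈ Finset.range N, f (betaNumber aj s b) :=
    Finset.sum_image (betaNumber_strictAnti aj s).injective.injOn
  rw [Finset.sum_sdiff_sub_sum_sdiff, himage, himage, betaSum_eq_sum_range hp,
    betaSum_eq_sum_range hq, Finset.sum_sub_distrib, Finset.sum_sub_distrib,
    sub_sub_sub_cancel_right]

variable {f : ℤ → ℤ}

lemma betaSum_le_betaSum (hmem : ∀ x ∈ betaSet aj q, f x ≤ 0)
    (hnot : ∀ x ∉ betaSet aj q, 0 ≤ f x) : betaSum aj q f ≤ betaSum aj p f := by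
  obtain ⟨P, Q, hP, hQ, hsum⟩ := exists_betaSum_sub_eq aj p q
  have hPnonneg : 0 ≤ ∑ x ∈ P, f x := Finset.sum_nonneg fun x hx => hnot x (hP.subset hx).2
  have hQnonpos : ∑ x ∈ Q, f x ≤ 0 := Finset.sum_nonpos fun x hx => hmem x (hQ.subset hx).1
  linarith [hsum f]

lemma sub_le_betaSum_sub_betaSum (hmem : ∀ x ∈ betaSet aj q, f x ≤ 0)
    (hnot : ∀ x ∉ betaSet aj q, 0 ≤ f x) {x y : ℤ} (hx : x ∈ betaSet aj p)
    (hy : y ∉ betaSet aj p) : f x - f y ≤ betaSum aj p f - betaSum aj q f := by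
  obtain ⟨P, Q, hP, hQ, hsum⟩ := exists_betaSum_sub_eq aj p q
  have hPnonneg : ∀ z ∈ P, 0 ≤ f z := fun z hz => hnot z (hP.subset hz).2
  have hQnonpos : ∀ z ∈ Q, f z ≤ 0 := fun z hz => hmem z (hQ.subset hz).1
  have hxP : f x ≤ ∑ z ∈ P, f z := by
    by_cases hxq : x ∈ betaSet aj q
    · exact (hmem x hxq).trans (Finset.sum_nonneg hPnonneg)
    · exact Finset.single_le_sum hPnonneg (hP.superset ⟨hx, hxq⟩)
  have hyQ : ∑ z ∈ Q, f z ≤ f y := by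
    by_cases hyq : y ∈ betaSet aj q
    · have := Finset.single_le_sum (f := -f) (fun z hz => neg_nonneg.2 (hQnonpos z hz))
        (hQ.superset ⟨hyq, hy⟩)
      simpa using this
    · exact (Finset.sum_nonpos hQnonpos).trans (hnot y hyq)
  rw [hsum f]
  exact sub_le_sub hxP hyQ

end BetaSum

section ResidueIndicator

variable {e : ℕ}

/-- The indicator function of the residue class of `k` modulo `e`. -/
def residueInd (e : ℕ) (k x : ℤ) : ℤ := if x % (e : ℤ) = k % e then 1 else 0

lemma residueInd_add_one (e : ℕ) (k x : ℤ) :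
    residueInd e k (x + 1) = residueInd e (k - 1) x := by
  simp only [residueInd, add_one_emod_eq_iff]

lemma sub_one_ediv_emod_of_emod_eq_zero (he : 0 < e) {x : ℤ} (hx : x % (e : ℤ) = 0) :
    (x - 1) / (e : ℤ) = x / e - 1 ∧ (x - 1) % (e : ℤ) = e - 1 := by
  rw [Int.ediv_emod_unique (by omega), mul_sub, mul_one,
    Int.mul_ediv_cancel' (Int.dvd_of_emod_eq_zero hx)]
  omega

lemma sub_one_ediv_emod_of_emod_ne_zero (he : 0 < e) {x : ℤ} (hx : x % (e : ℤ) ≠ 0) :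
    (x - 1) / (e : ℤ) = x / e ∧ (x - 1) % (e : ℤ) = x % e - 1 := by
  have hnonneg := Int.emod_nonneg x (b := e) (by omega)
  have hlt := Int.emod_lt_of_pos x (b := e) (by omega)
  have hdecomp := Int.emod_add_mul_ediv x e
  rw [Int.ediv_emod_unique (by omega)]
  omega

lemma residueInd_eq_ediv_sub_ediv (he : 0 < e) (k x : ℤ) :
    residueInd e k x = (x - k) / e - (x - k - 1) / e := by
  simp only [residueInd, Int.emod_eq_emod_iff_emod_sub_eq_zero (m := x)]
  split_ifs with hxk
  · rw [(sub_one_ediv_emod_of_emod_eq_zero he hxk).1, sub_sub_cancel]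
  · rw [(sub_one_ediv_emod_of_emod_ne_zero he hxk).1, sub_self]

lemma eq_sum_mul_residueInd (he : 0 < e) (f : ℤ → ℤ) (x : ℤ) :
    f (x % e) = ∑ k ∈ Finset.range e, f k * residueInd e k x := by
  have hnonneg := Int.emod_nonneg x (b := e) (by omega)
  have hlt := Int.emod_lt_of_pos x (b := e) (by omega)
  lift x % (e : ℤ) to ℕ using hnonneg with m hm
  rw [Finset.sum_eq_single_of_mem m (by simpa using hlt)]
  · simp [residueInd, ← hm, Int.emod_eq_of_lt, hlt]
  · intro k hk hkm
    rw [residueInd, if_neg, mul_zero]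
    rw [← hm, Int.emod_eq_of_lt (by omega) (by simpa using hk)]
    exact_mod_cast hkm.symm

end ResidueIndicator

section Counting

variable {e r : ℕ} {a : Fin r → ℤ} {lam : Multipartition r}

lemma sum_residueInd_row (he : 0 < e) (aj k : ℤ) (p : PartitionFun) (b : ℕ) :
    ∑ c ∈ Finset.range (p.part b), residueInd e k (aj + c - b) =
      (betaNumber aj p b - k) / e - (aj - (b + 1) - k) / e := by
  have htelescope := Finset.sum_range_sub (fun c : ℕ => (aj + c - (b + 1) - k) / (e : ℤ)) (p.part b)
  have hβ : betaNumber aj p b = aj + p.part b - (b + 1) := by rw [betaNumber, add_comm aj]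
  rw [Nat.cast_zero, add_zero] at htelescope
  rw [hβ, ← htelescope]
  refine Finset.sum_congr rfl fun c _ => ?_
  rw [residueInd_eq_ediv_sub_ediv he]
  congr 2 <;> push_cast <;> ring

/-- The regularised sum over all components of a multipartition, component `j` being summed
against its own function `F j`. -/
noncomputable def multiBetaSum (a : Fin r → ℤ) (lam : Multipartition r) :
    (Fin r → ℤ → ℤ) →ₗ[ℤ] ℤ :=
  ∑ j, betaSum (a j) (lam j) ∘ₗ LinearMap.proj j

lemma multiBetaSum_apply (F : Fin r → ℤ → ℤ) :
    multiBetaSum a lam F = ∑ j, betaSum (a j) (lam j) (F j) := by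
  simp [multiBetaSum]

lemma nodeCount_eq_multiBetaSum (he : 0 < e) (a : Fin r → ℤ) (lam : Multipartition r) (k : ℤ) :
    (nodeCount e a lam k : ℤ) = multiBetaSum a lam fun _ x => (x - k) / e := by
  obtain ⟨N, hN⟩ := exists_forall_part_eq_zero lam
  let nodes : Finset ((_ : Fin r) × (_ : ℕ) × ℕ) :=
    Finset.univ.sigma fun j => (Finset.range N).sigma fun b =>
      (Finset.range ((lam j).part b)).filter fun c : ℕ => (a j + (c : ℤ) - b) % (e : ℤ) = k % e
  have hinj : Function.Injective fun x : (_ : Fin r) × (_ : ℕ) × ℕ => (x.2.1, x.2.2, x.1) := by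
    rintro ⟨j, b, c⟩ ⟨j', b', c'⟩ h
    simp_all
  have hset : {x : Node r | (lam x.2.2).InDiag x.1 x.2.1 ∧
      (a x.2.2 + (x.2.1 : ℤ) - (x.1 : ℤ)) % (e : ℤ) = k % e} =
      (nodes.image fun x => (x.2.1, x.2.2, x.1) : Finset (Node r)) := by
    ext ⟨b, c, j⟩
    have hb : c < (lam j).part b → b < N := fun hc =>
      lt_of_not_ge fun hNb => by simp [hN j b hNb] at hc
    simp only [nodes, PartitionFun.InDiag, Set.mem_ofPred_eq, Finset.mem_coe, Finset.mem_image,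
      Finset.mem_sigma, Finset.mem_univ, Finset.mem_range, Finset.mem_filter, Sigma.exists,
      Prod.mk.injEq, ↓existsAndEq, true_and, and_true]
    tauto
  rw [nodeCount, hset, Set.ncard_coe_finset, Finset.card_image_of_injective _ hinj,
    multiBetaSum_apply]
  simp only [nodes, Finset.card_sigma, Nat.cast_sum]
  refine Finset.sum_congr rfl fun j _ => ?_
  rw [betaSum_eq_sum_range (hN j)]
  refine Finset.sum_congr rfl fun b _ => ?_
  rw [← sum_residueInd_row he, Finset.card_filter]
  push_cast
  rfl

lemma msize_eq_multiBetaSum (a : Fin r → ℤ) (lam : Multipartition r) :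
    (msize lam : ℤ) = multiBetaSum a lam fun _ x => x := by
  have hcount : msize lam = nodeCount 1 a lam 0 := by
    simp [msize, nodeCount, diag]
  rw [hcount, nodeCount_eq_multiBetaSum one_pos]
  simp

lemma ncard_setOf_row {N : ℕ} {P : ℕ → Prop} [DecidablePred P] (hP : ∀ b, P b → b < N) (g : ℕ → ℕ) :
    (Set.ncard {x : ℕ × ℕ | P x.1 ∧ x.2 = g x.1} : ℤ) =
      ∑ b ∈ Finset.range N, if P b then 1 else 0 := by
  have hset : {x : ℕ × ℕ | P x.1 ∧ x.2 = g x.1} =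
      (({b ∈ Finset.range N | P b}).image fun b => (b, g b) : Finset (ℕ × ℕ)) := by
    ext ⟨b, c⟩
    simp only [Set.mem_ofPred_eq, Finset.coe_image, Finset.coe_filter, Finset.mem_range,
      Set.mem_image, Prod.mk.injEq]
    grind
  rw [hset, Set.ncard_coe_finset, Finset.card_image_of_injective _ fun b c h => congrArg Prod.fst h]
  simp

lemma removableCount_eq_sum {j : Fin r} {N : ℕ} (hN : ∀ b, N ≤ b → (lam j).part b = 0) (k : ℤ) :
    (removableCount e a lam k j : ℤ) = ∑ b ∈ Finset.range N,
      if (lam j).part (b + 1) < (lam j).part b then residueInd e k (betaNumber (a j) (lam j) b)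
      else 0 := by
  have hset : {x : ℕ × ℕ | (lam j).Removable x.1 x.2 ∧
      (a j + (x.2 : ℤ) - (x.1 : ℤ)) % (e : ℤ) = k % e} =
      {x : ℕ × ℕ | ((lam j).part (x.1 + 1) < (lam j).part x.1 ∧
        betaNumber (a j) (lam j) x.1 % (e : ℤ) = k % e) ∧ x.2 = (lam j).part x.1 - 1} := by
    ext ⟨b, c⟩
    have hβ : (lam j).part b = c + 1 → betaNumber (a j) (lam j) b = a j + c - b := fun h => by
      rw [betaNumber, h]; push_cast; ring
    simp only [PartitionFun.Removable, Set.mem_ofPred_eq]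
    grind
  have hrow (b : ℕ) (hb : (lam j).part (b + 1) < (lam j).part b ∧
      betaNumber (a j) (lam j) b % (e : ℤ) = k % e) : b < N := by grind
  rw [removableCount, hset, ncard_setOf_row hrow (fun b => (lam j).part b - 1)]
  simp only [residueInd, ite_and]

lemma addableCount_eq_sum {j : Fin r} {N : ℕ} (hN : ∀ b, N ≤ b → (lam j).part b = 0) (k : ℤ) :
    (addableCount e a lam k j : ℤ) = ∑ b ∈ Finset.range (N + 1),
      if b = 0 ∨ (lam j).part b < (lam j).part (b - 1) then
        residueInd e k (betaNumber (a j) (lam j) b + 1) else 0 := by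
  have hset : {x : ℕ × ℕ | (lam j).Addable x.1 x.2 ∧
      (a j + (x.2 : ℤ) - (x.1 : ℤ)) % (e : ℤ) = k % e} =
      {x : ℕ × ℕ | ((x.1 = 0 ∨ (lam j).part x.1 < (lam j).part (x.1 - 1)) ∧
        (betaNumber (a j) (lam j) x.1 + 1) % (e : ℤ) = k % e) ∧ x.2 = (lam j).part x.1} := by
    ext ⟨b, c⟩
    have hβ : betaNumber (a j) (lam j) b + 1 = a j + (lam j).part b - b := by
      rw [betaNumber]; ring
    simp only [PartitionFun.Addable, Set.mem_ofPred_eq]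
    grind
  have hrow (b : ℕ) (hb : (b = 0 ∨ (lam j).part b < (lam j).part (b - 1)) ∧
      (betaNumber (a j) (lam j) b + 1) % (e : ℤ) = k % e) : b < N + 1 := by grind
  rw [addableCount, hset, ncard_setOf_row hrow]
  simp only [residueInd, ite_and]

lemma delta_eq_sum {j : Fin r} {N : ℕ} (hN : ∀ b, N ≤ b → (lam j).part b = 0) (k : ℤ) :
    delta e a lam k j = ∑ b ∈ Finset.range N, residueInd e k (betaNumber (a j) (lam j) b) -
      ∑ b ∈ Finset.range (N + 1), residueInd e k (betaNumber (a j) (lam j) b + 1) := by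
  rw [delta, removableCount_eq_sum hN, addableCount_eq_sum hN, Finset.sum_range_succ',
    Finset.sum_range_succ', ← sub_sub, ← sub_sub, ← Finset.sum_sub_distrib,
    ← Finset.sum_sub_distrib]
  simp only [Nat.add_eq_zero_iff, one_ne_zero, and_false, false_or, Nat.add_sub_cancel, true_or,
    if_true]
  congr 1
  refine Finset.sum_congr rfl fun b _ => ?_
  split_ifs with hb
  · rfl
  · have heq : (lam j).part (b + 1) = (lam j).part b :=
      le_antisymm ((lam j).antitone b.le_succ) (not_lt.1 hb)
    have hβ : betaNumber (a j) (lam j) (b + 1) + 1 = betaNumber (a j) (lam j) b := by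
      simp only [betaNumber, heq]; push_cast; ring
    rw [hβ, sub_self, sub_self]

lemma delta_eq_betaSum (a : Fin r → ℤ) (lam : Multipartition r) (k : ℤ) (j : Fin r) :
    delta e a lam k j = betaSum (a j) (lam j) (residueInd e k) -
      betaSum (a j) (lam j) (residueInd e (k - 1)) - residueInd e k (a j) := by
  obtain ⟨N, hN⟩ := (lam j).finite_support
  have htelescope := Finset.sum_range_sub (fun b : ℕ => residueInd e k (a j - b)) N
  have hlast : betaNumber (a j) (lam j) N + 1 = a j - N := by
    rw [betaNumber_of_part_eq_zero (hN N le_rfl)]; ring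
  rw [delta_eq_sum hN, Finset.sum_range_succ, hlast, betaSum_eq_sum_range hN,
    betaSum_eq_sum_range hN]
  simp only [← residueInd_add_one, Finset.sum_sub_distrib, Nat.cast_add, Nat.cast_one,
    Nat.cast_zero, sub_zero] at htelescope ⊢
  have hshift (b : ℕ) : a j - ((b : ℤ) + 1) + 1 = a j - b := by ring
  simp only [hshift]
  linarith

lemma hub_eq_multiBetaSum (a : Fin r → ℤ) (lam : Multipartition r) (k : ℤ) :
    hub e a lam k = multiBetaSum a lam (fun _ => residueInd e k) -
      multiBetaSum a lam (fun _ => residueInd e (k - 1)) - ∑ j, residueInd e k (a j) := by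
  simp only [hub, delta_eq_betaSum, multiBetaSum_apply, Finset.sum_sub_distrib]

end Counting

section SameHub

variable {e r : ℕ} {a : Fin r → ℤ} {lam mu : Multipartition r}

lemma SameHub.multiBetaSum_residueInd (he : 0 < e) (h : SameHub e a lam mu) (k : ℤ) :
    multiBetaSum a lam (fun _ => residueInd e k) = multiBetaSum a mu (fun _ => residueInd e k) := by
  set D : ℤ → ℤ := fun k => multiBetaSum a lam (fun _ => residueInd e k) -
    multiBetaSum a mu (fun _ => residueInd e k) with hD
  have hperiodic : Function.Periodic D 1 := fun k => by
    have := h (k + 1)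
    simp only [hub_eq_multiBetaSum, add_sub_cancel_right] at this
    simp only [hD]
    linarith
  have hconst (k : ℤ) : D k = D 0 := by simpa using hperiodic.int_mul_eq k
  have hone : ∑ k ∈ Finset.range e, (fun _ : Fin r => residueInd e k) = fun _ _ => 1 := by
    ext j x
    simpa using (eq_sum_mul_residueInd he (fun _ => 1) x).symm
  have hsum : ∑ k ∈ Finset.range e, D k = 0 := by
    rw [hD, Finset.sum_sub_distrib, ← map_sum, ← map_sum, hone]
    simp only [multiBetaSum_apply, betaSum_const, sub_self]
  have hzero : D 0 = 0 := by
    simpa [hconst, he.ne'] using hsum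
  exact sub_eq_zero.1 ((hconst k).trans hzero)

lemma SameHub.multiBetaSum_emod (he : 0 < e) (h : SameHub e a lam mu) (f : ℤ → ℤ) :
    multiBetaSum a lam (fun _ x => f (x % e)) = multiBetaSum a mu (fun _ x => f (x % e)) := by
  have hf : (fun (_ : Fin r) (x : ℤ) => f (x % e)) =
      ∑ k ∈ Finset.range e, f k • fun _ => residueInd e k := by
    ext j x
    simpa using eq_sum_mul_residueInd he f x
  simp only [hf, map_sum, map_smul, h.multiBetaSum_residueInd he]

-- Regularised sums of functions of the residue are determined by the hub, and those of constants
-- vanish, so only the coefficient of the level `x / e` matters.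
lemma SameHub.multiBetaSum_sub (he : 0 < e) (h : SameHub e a lam mu) {F : Fin r → ℤ → ℤ}
    {m : ℤ} {f : ℤ → ℤ} {c : Fin r → ℤ} (hF : ∀ j x, F j x = m * (x / e) + f (x % e) + c j) :
    multiBetaSum a lam F - multiBetaSum a mu F =
      m * ((nodeCount e a lam 0 : ℤ) - nodeCount e a mu 0) := by
  have hdecomp : F = (m • fun _ x => (x - 0) / (e : ℤ)) + (fun _ x => f (x % e)) +
      fun j _ => c j := by
    ext j x
    simp [hF]
  have hconst (nu : Multipartition r) : multiBetaSum a nu (fun j _ => c j) = 0 := by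
    simp [multiBetaSum_apply]
  rw [nodeCount_eq_multiBetaSum he, nodeCount_eq_multiBetaSum he, hdecomp]
  simp only [map_add, map_smul, h.multiBetaSum_emod he, hconst, smul_eq_mul]
  ring

lemma SameHub.nodeCount_sub_nodeCount (he : 0 < e) (h : SameHub e a lam mu) (k : ℤ) :
    (nodeCount e a lam k : ℤ) - nodeCount e a mu k =
      (nodeCount e a lam 0 : ℤ) - nodeCount e a mu 0 := by
  have hlevel (x : ℤ) : (x - k) / (e : ℤ) = x / e + (x % e - k) / e := by
    conv_lhs => rw [← Int.emod_add_mul_ediv x e, add_sub_right_comm,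
      Int.add_mul_ediv_left _ _ (by omega), add_comm]
  rw [nodeCount_eq_multiBetaSum he a lam k, nodeCount_eq_multiBetaSum he a mu k,
    h.multiBetaSum_sub he (m := 1) (f := fun z => (z - k) / e) (c := 0), one_mul]
  intro j x
  rw [hlevel, one_mul, Pi.zero_apply, add_zero]

lemma SameHub.msize_sub_msize (he : 0 < e) (h : SameHub e a lam mu) :
    (msize lam : ℤ) - msize mu = e * ((nodeCount e a lam 0 : ℤ) - nodeCount e a mu 0) := by
  rw [msize_eq_multiBetaSum a, msize_eq_multiBetaSum a,
    h.multiBetaSum_sub he (m := e) (f := id) (c := 0)]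
  intro j x
  rw [id, Int.mul_ediv_add_emod, Pi.zero_apply, add_zero]

lemma SameHub.weight_eq (he : 0 < e) (h : SameHub e a lam mu) :
    weight e a lam =
      weight e a mu + ((nodeCount e a lam 0 : ℚ) - nodeCount e a mu 0) * (r : ℚ) := by
  have hcount (k : ℤ) : (nodeCount e a lam k : ℚ) =
      nodeCount e a mu k + ((nodeCount e a lam 0 : ℚ) - nodeCount e a mu 0) := by
    rw [← sub_eq_iff_eq_add']
    exact_mod_cast h.nodeCount_sub_nodeCount he k
  simp only [weight]
  rw [Finset.sum_congr rfl fun j _ => hcount (a j),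
    Finset.sum_congr rfl fun (k : ℕ) _ => by
      rw [hcount k, hcount (k + 1), add_sub_add_right_eq_sub],
    Finset.sum_add_distrib]
  simp only [Finset.sum_const, Finset.card_univ, Fintype.card_fin, nsmul_eq_mul]
  ring

lemma SameHub.weight_eq_of_msize_eq (he : 0 < e) (h : SameHub e a lam mu)
    (hsize : msize lam = msize mu) : weight e a lam = weight e a mu := by
  have hzero : (nodeCount e a lam 0 : ℤ) - nodeCount e a mu 0 = 0 := by
    simpa [hsize, he.ne'] using (h.msize_sub_msize he).symm
  have hzero' : (nodeCount e a lam 0 : ℚ) - nodeCount e a mu 0 = 0 := by exact_mod_cast hzero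
  rw [h.weight_eq he, hzero', zero_mul, add_zero]

end SameHub

section Levels

variable {e : ℕ} {aj : ℤ} {p : PartitionFun}

lemma level_isGreatest (he : 0 < e) (aj : ℤ) (p : PartitionFun) (k : ℕ) :
    IsGreatest {x : ℤ | x * (e : ℤ) + k ∈ betaSet aj p} (level e aj p k) := by
  have hpos : (0 : ℤ) < e := by exact_mod_cast he
  obtain ⟨N, hN⟩ := p.finite_support
  have hbdd : BddAbove {x : ℤ | x * (e : ℤ) + k ∈ betaSet aj p} := by
    refine ⟨(betaNumber aj p 0 - k) / e, ?_⟩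
    rintro x ⟨b, hb : _ = betaNumber aj p b⟩
    have := (betaNumber_strictAnti aj p).antitone b.zero_le
    rw [Int.le_ediv_iff_mul_le hpos]
    omega
  have hne : {x : ℤ | x * (e : ℤ) + k ∈ betaSet aj p}.Nonempty := by
    set x := (aj - N - 1 - k) / (e : ℤ)
    have hx : x * e ≤ aj - N - 1 - k := Int.ediv_mul_le _ hpos.ne'
    refine ⟨x, (aj - 1 - k - x * e).toNat, ?_⟩
    rw [hN _ (by omega)]
    omega
  exact ⟨Int.csSup_mem hne hbdd, fun x hx => le_csSup hbdd hx⟩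

lemma add_mem_betaSet_add {t x : ℤ} : x + t ∈ betaSet (aj + t) p ↔ x ∈ betaSet aj p :=
  exists_congr fun b => by constructor <;> intro h <;> linarith

lemma level_add_mul (he : 0 < e) (aj q : ℤ) (p : PartitionFun) (k : ℕ) :
    level e (aj + e * q) p k = level e aj p k + q := by
  have hshift (x : ℤ) : (x + q) * e + k ∈ betaSet (aj + e * q) p ↔ x * e + k ∈ betaSet aj p := by
    rw [← add_mem_betaSet_add (x := x * e + k) (t := e * q)]
    ring_nf
  have hgreatest := level_isGreatest he aj p k
  refine (level_isGreatest he (aj + e * q) p k).unique ⟨(hshift _).2 hgreatest.1, fun x hx => ?_⟩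
  rw [← sub_le_iff_le_add]
  exact hgreatest.2 ((hshift (x - q)).1 (by rwa [sub_add_cancel]))

lemma IsECore.mem_betaSet_iff_le_level (he : 0 < e) (hcore : IsECore e aj p) (k : ℕ) (x : ℤ) :
    x * e + k ∈ betaSet aj p ↔ x ≤ level e aj p k := by
  refine ⟨fun hx => (level_isGreatest he aj p k).2 hx, fun hx => ?_⟩
  induction x, hx using Int.leInductionDown with
  | base => exact (level_isGreatest he aj p k).1
  | pred n _ ih => simpa [sub_mul, sub_add_eq_add_sub] using hcore _ ih

/-- The signed number of levels by which position `x` lies below the upper base level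
`bt (x % e) + 1` of its runner, levels increasing downwards and being shifted by `q` to account
for a change of charge by `e * q`. -/
def baseExcess (e : ℕ) (bt : ℕ → ℤ) (q x : ℤ) : ℤ := x / e - bt (x % e).toNat + (q - 1)

variable {bt : ℕ → ℤ} {q x : ℤ}

lemma IsECore.baseExcess_sign (he : 0 < e) (hcore : IsECore e aj p)
    (hbt : ∀ k < e, level e (aj + e * q) p k = bt k ∨ level e (aj + e * q) p k = bt k + 1) :
    (x ∈ betaSet aj p → baseExcess e bt q x ≤ 0) ∧
      (x ∉ betaSet aj p → 0 ≤ baseExcess e bt q x) := by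
  have hnonneg := Int.emod_nonneg x (b := e) (by omega)
  have hlt := Int.emod_lt_of_pos x (b := e) (by omega)
  have hmem := hcore.mem_betaSet_iff_le_level he (x % (e : ℤ)).toNat (x / e)
  rw [Int.toNat_of_nonneg hnonneg, Int.ediv_mul_add_emod] at hmem
  have hlevel := hbt (x % (e : ℤ)).toNat (by omega)
  rw [level_add_mul he] at hlevel
  rw [hmem, baseExcess]
  omega

lemma baseExcess_sub_one_sub (he : 0 < e) {i : ℕ} (hi : i < e) (hx : x % (e : ℤ) = i) :
    baseExcess e bt q (x - 1) - baseExcess e bt q x =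
      bt i - bt (if i = 0 then e - 1 else i - 1) - if i = 0 then 1 else 0 := by
  unfold baseExcess
  split_ifs with hi0
  · subst hi0
    obtain ⟨hdiv, hmod⟩ := sub_one_ediv_emod_of_emod_eq_zero he (x := x) (by simpa using hx)
    rw [hdiv, hmod, hx, show ((e : ℤ) - 1).toNat = e - 1 by omega, Int.toNat_natCast]
    ring
  · obtain ⟨hdiv, hmod⟩ := sub_one_ediv_emod_of_emod_ne_zero he (x := x) (by omega)
    rw [hdiv, hmod, hx, show ((i : ℤ) - 1).toNat = i - 1 by omega, Int.toNat_natCast]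
    ring

end Levels

section Kconst

variable {e r i : ℕ} {a : Fin r → ℤ} {m : Multipartition r}

lemma IsBaseTuple.add_const (he : 0 < e) {a' : Fin r → ℤ} {bt : ℕ → ℤ}
    (h : IsBaseTuple e a m a' bt) (t : ℤ) :
    IsBaseTuple e a m (fun j => a' j + e * t) fun k => bt k + t := by
  refine ⟨fun j => ?_, fun k hk j => ?_⟩
  · rw [add_sub_right_comm]
    exact dvd_add (h.1 j) (dvd_mul_right _ _)
  · rw [level_add_mul he]
    rcases h.2 k hk j with hbt | hbt
    · exact Or.inl (by rw [hbt])
    · exact Or.inr (by rw [hbt, add_right_comm])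

lemma sSup_baseTuple_entry (he : 0 < e) (a : Fin r → ℤ) (m : Multipartition r) (i : ℕ) :
    sSup {x : ℤ | ∃ a' bt, IsBaseTuple e a m a' bt ∧ bt i = x} = 0 := by
  rcases Set.eq_empty_or_nonempty {x : ℤ | ∃ a' bt, IsBaseTuple e a m a' bt ∧ bt i = x} with
    hempty | ⟨_, a', bt, hbase, rfl⟩
  · rw [hempty, Int.csSup_empty]
  · refine Int.csSup_of_not_bddAbove ?_
    rintro ⟨M, hM⟩
    have := hM ⟨_, _, hbase.add_const he (M - bt i + 1), rfl⟩
    omega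

lemma sInf_mem_of_sInf_ne_zero {S : Set ℤ} (hS : sInf S ≠ 0) : sInf S ∈ S := by
  refine Int.csInf_mem ?_ ?_
  · by_contra hempty
    exact hS (by rw [Set.not_nonempty_iff_eq_empty.1 hempty, Int.csInf_empty])
  · by_contra hbdd
    exact hS (Int.csInf_of_not_bddBelow hbdd)

-- Base tuples can be translated, so the supremum in `Kconst` takes its junk value `0`: `Kconst`
-- normalises `bt i = 0`. The infimum then is nonzero, hence attained.
lemma exists_isBaseTuple_of_Kconst_nonneg (he : 0 < e) (hK : 0 ≤ Kconst e a m i) :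
    ∃ a' bt, IsBaseTuple e a m a' bt ∧ Kconst e a m i =
      bt i - bt (if i = 0 then e - 1 else i - 1) - if i = 0 then 2 else 1 := by
  simp only [Kconst, sSup_baseTuple_entry he] at hK ⊢
  obtain ⟨a', bt, hbase, hi, hprev⟩ := sInf_mem_of_sInf_ne_zero
    (S := {x : ℤ | ∃ a' bt, IsBaseTuple e a m a' bt ∧ bt i = 0 ∧
      bt (if i = 0 then e - 1 else i - 1) = x}) fun hzero => by
        rw [hzero] at hK
        split_ifs at hK <;> omega
  exact ⟨a', bt, hbase, by rw [hi, hprev]⟩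

end Kconst

section CoreBlock

variable {e r i : ℕ} {a : Fin r → ℤ} {lam m : Multipartition r}

lemma SameHub.Kconst_lt_nodeCount_sub (he : 0 < e) (hi : i < e) (h : SameHub e a lam m)
    (hcore : IsMulticore e a m) (hK : 0 ≤ Kconst e a m i) {j : Fin r} {x : ℤ}
    (hxi : (x + 1) % (e : ℤ) = (i : ℤ) % e) (hx : x ∈ betaSet (a j) (lam j))
    (hx' : x + 1 ∉ betaSet (a j) (lam j)) :
    Kconst e a m i < (nodeCount e a lam 0 : ℤ) - nodeCount e a m 0 := by
  obtain ⟨a', bt, ⟨hdvd, hlevel⟩, hKbt⟩ := exists_isBaseTuple_of_Kconst_nonneg he hK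
  choose q hq using hdvd
  have ha' (j : Fin r) : a' j = a j + e * q j := by rw [← hq j, add_sub_cancel]
  simp only [ha'] at hlevel
  have hsign (j : Fin r) (x : ℤ) :=
    (hcore j).baseExcess_sign (x := x) he fun k hk => hlevel k hk j
  have hterm (j : Fin r) := betaSum_le_betaSum (p := lam j) (fun x => (hsign j x).1)
    fun x => (hsign j x).2
  have hjump := baseExcess_sub_one_sub (bt := bt) (q := q j) he hi
    (hxi.trans (Int.emod_eq_of_lt (by omega) (by omega)))
  rw [add_sub_cancel_right] at hjump
  calc Kconst e a m i
      < baseExcess e bt (q j) x - baseExcess e bt (q j) (x + 1) := by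
        rw [hjump, hKbt]; split_ifs <;> omega
    _ ≤ betaSum (a j) (lam j) (baseExcess e bt (q j)) -
          betaSum (a j) (m j) (baseExcess e bt (q j)) :=
        sub_le_betaSum_sub_betaSum (fun x => (hsign j x).1) (fun x => (hsign j x).2) hx hx'
    _ ≤ ∑ j, (betaSum (a j) (lam j) (baseExcess e bt (q j)) -
          betaSum (a j) (m j) (baseExcess e bt (q j))) :=
        Finset.single_le_sum (f := fun j => betaSum (a j) (lam j) (baseExcess e bt (q j)) -
          betaSum (a j) (m j) (baseExcess e bt (q j)))
          (fun j _ => sub_nonneg.2 (hterm j)) (Finset.mem_univ j)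
    _ = multiBetaSum a lam (fun j => baseExcess e bt (q j)) -
          multiBetaSum a m (fun j => baseExcess e bt (q j)) := by
        rw [Finset.sum_sub_distrib, multiBetaSum_apply, multiBetaSum_apply]
    _ = (nodeCount e a lam 0 : ℤ) - nodeCount e a m 0 := by
        rw [h.multiBetaSum_sub he (m := 1) (f := fun z => -bt z.toNat) (c := fun j => q j - 1),
          one_mul]
        intro j x
        rw [baseExcess]
        ring

lemma add_one_mem_betaSet_of_weight_le (he : 0 < e) (hi : i < e) (hcore : IsMulticore e a m)
    (hmin : MinimalWeight e a m) (h : SameHub e a lam m)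
    (hw : weight e a lam ≤ weight e a m + (Kconst e a m i : ℚ) * (r : ℚ)) (j : Fin r) {x : ℤ}
    (hx : x ∈ betaSet (a j) (lam j)) (hxi : (x + 1) % (e : ℤ) = (i : ℤ) % e) :
    x + 1 ∈ betaSet (a j) (lam j) := by
  have hr : (0 : ℚ) < r := by exact_mod_cast j.pos
  have hK : 0 ≤ Kconst e a m i := by
    have hKr : 0 ≤ (Kconst e a m i : ℚ) * r := by linarith [hmin lam fun k => (h k).symm]
    exact_mod_cast nonneg_of_mul_nonneg_left hKr hr
  have hle : (nodeCount e a lam 0 : ℤ) - nodeCount e a m 0 ≤ Kconst e a m i := by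
    rw [h.weight_eq he] at hw
    exact_mod_cast le_of_mul_le_mul_right (le_of_add_le_add_left hw) hr
  by_contra hx'
  exact hle.not_gt (h.Kconst_lt_nodeCount_sub he hi hcore hK hxi hx hx')

end CoreBlock

/-- Lemma 5.5: fix `i ∈ {0,…,e−1}` and let `B` be a block with
core block `C` such that `w(B) ≤ w(C) + K_i(C)·r` and `δ_i(B) ≥ 0`. If `λ, μ ∈ B`
with `λ > μ` lexicographically, then `Φ_i(λ) > Φ_i(μ)` lexicographically. -/
theorem stmt_13 {e r : ℕ} (he : 2 ≤ e) (hr : 0 < r) (a : Fin r → ℤ)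
    (i : ℕ) (hi : i < e)
    (mu0 : Multipartition r) (hmu0core : IsMulticore e a mu0)
    (hmu0min : MinimalWeight e a mu0)
    (lam mu : Multipartition r)
    (hlamB : SameHub e a lam mu0) (hmuB : SameHub e a mu mu0)
    (hsize : msize lam = msize mu)
    (hw : weight e a lam ≤ weight e a mu0 + (Kconst e a mu0 i : ℚ) * (r : ℚ))
    (hdel : 0 ≤ hub e a lam (i : ℤ))
    (lam' mu' : Multipartition r)
    (hlam' : ∀ j, betaSet (a j) (lam' j) = phiMap e i '' betaSet (a j) (lam j))
    (hmu' : ∀ j, betaSet (a j) (mu' j) = phiMap e i '' betaSet (a j) (mu j))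
    (hgt : lexGT lam mu) :
    lexGT lam' mu' := by
  have he' : 0 < e := by omega
  have hblock : SameHub e a mu lam := fun k => (hmuB k).trans (hlamB k).symm
  have hwmu : weight e a mu ≤ weight e a mu0 + (Kconst e a mu0 i : ℚ) * (r : ℚ) :=
    (hblock.weight_eq_of_msize_eq he' hsize.symm).trans_le hw
  rw [lexGT_iff_betaSet a] at hgt ⊢
  obtain ⟨j, heq, hcolex⟩ := hgt
  refine ⟨j, fun j' hj' => ?_, ?_⟩
  · rw [hlam', hmu', heq j' hj']
  · rw [hlam', hmu']
    exact hcolex.phiMap_image he fun x hx hxi =>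
      add_one_mem_betaSet_of_weight_le he' hi hmu0core hmu0min hmuB hwmu j hx hxi

end AK
end

section
/- Fix i ∈ ℤ/eℤ. Let λ be a multipartition with no addable nodes of residue i and exactly δ removable nodes of residue i, listed as A_1 < A_2 < … < A_δ with respect to the order on nodes. Let σ be a permutation of {1,…,δ} with length k (the number of inversions of σ), and remove the removable i-nodes of λ one at a time in the order A_{σ(1)}, A_{σ(2)}, …, A_{σ(δ)}, writing λ^{−σ(m)} for the multipartition obtained after removing the first m of these nodes (λ^{−σ(0)} = λ). Then Σ_{m=1}^{δ} N_{A_{σ(m)}}(λ^{−σ(m−1)}) = δ(δ−1)/2 − 2k. -/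
/-!
Combinatorial framework for multipartitions, residues, β-sets, abacus levels,
weights, hubs, core blocks and Scopes-type moves, following Fayers and the paper.
Rows and columns of Young diagrams are indexed from 0, so the node in row `b`
and column `c` (0-based) of component `j` has residue `a j + c - b` mod `e`.
-/

open scoped Classical

namespace AK

/-!
Removing an `i`-node `B` from a multipartition turns it from a removable into an addable `i`-node
and leaves every other `i`-node alone, because the nodes whose status could change besides `B` are
the neighbours of `B`, whose residues are `i ± 1 ≠ i`. Hence `N_A` grows by `2` if `B` is below `A`
and is unchanged otherwise. Along the removal of `A_{σ(1)}, …, A_{σ(δ)}` each non-inversion of `σ`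
therefore contributes `2` to the sum, in addition to the sum of the values `N_{A_p}(λ)`. If `λ` has
no addable `i`-nodes, then `N_{A_p}(λ) = -(p - 1)`, and the total is
`2 (δ(δ-1)/2 - k) - δ(δ-1)/2`.
-/

open Finset

section Permutations

variable {d : ℕ}

theorem eq_add_sum_Iio {M : Type*} [AddCommMonoid M] {f : ℕ → M} {g : Fin d → M}
    (hfg : ∀ q : Fin d, f (q + 1) = f q + g q) (m : Fin d) :
    f m = f 0 + ∑ q ∈ Iio m, g q := by
  obtain ⟨m, hm⟩ := m
  induction m with
  | zero =>
    have : Iio (⟨0, hm⟩ : Fin d) = ∅ := by ext q; simp [Fin.lt_def]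
    simp [this]
  | succ m ih =>
    have hm' : m < d := by omega
    have hIio : Iio (⟨m + 1, hm⟩ : Fin d) = insert ⟨m, hm'⟩ (Iio ⟨m, hm'⟩) := by
      ext q
      simp only [mem_Iio, mem_insert, Fin.lt_def, Fin.ext_iff]
      omega
    rw [hIio, sum_insert (by simp), add_left_comm, ← ih hm', hfg ⟨m, hm'⟩, add_comm]

theorem permLength_eq_sum_card (σ : Equiv.Perm (Fin d)) :
    permLength d σ = ∑ m, #{q ∈ Iio m | σ m < σ q} := by
  simp only [permLength, card_filter, Fintype.sum_prod_type_right, ← filter_gt_eq_Iio,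
    sum_filter, ite_and]

theorem sum_fin_val_eq_choose_two (d : ℕ) : ∑ m : Fin d, (m : ℕ) = d.choose 2 := by
  rw [Fin.sum_univ_eq_sum_range fun m => m, sum_range_id, Nat.choose_two_right]

theorem sum_card_noninversions_add_permLength (σ : Equiv.Perm (Fin d)) :
    ∑ m, #{q ∈ Iio m | σ q < σ m} + permLength d σ = d.choose 2 := by
  rw [permLength_eq_sum_card, ← sum_add_distrib, ← sum_fin_val_eq_choose_two]
  refine sum_congr rfl fun m _ => ?_
  have hinv : ({q ∈ Iio m | σ m < σ q} : Finset (Fin d)) = {q ∈ Iio m | ¬σ q < σ m} := by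
    refine filter_congr fun q hq => ?_
    have hne : σ m ≠ σ q := σ.injective.ne (mem_Iio.1 hq).ne'
    rw [not_lt, hne.le_iff_lt]
  rw [hinv, card_filter_add_card_filter_not, Fin.card_Iio]

end Permutations

namespace PartitionFun

variable {lam mu : PartitionFun} {b c : ℕ}

theorem part_eq_of_inDiag_iff (hbc : lam.InDiag b c)
    (hdiag : ∀ b' c', mu.InDiag b' c' ↔ lam.InDiag b' c' ∧ (b', c') ≠ (b, c)) :
    lam.part b = c + 1 ∧ mu.part = Function.update lam.part b c := by
  simp only [InDiag, ne_eq, Prod.mk.injEq, not_and] at hbc hdiag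
  have hmu : mu.part b ≤ c := not_lt.1 fun h => ((hdiag b c).1 h).2 rfl rfl
  have hlam : lam.part b ≤ c + 1 := by
    by_contra! h
    have := (hdiag b (c + 1)).2 ⟨h, by omega⟩
    omega
  have hmu' : c ≤ mu.part b := by
    by_contra! h
    have := (hdiag b (mu.part b)).2 ⟨by omega, by omega⟩
    omega
  refine ⟨by omega, Function.eq_update_iff.2 ⟨by omega, fun b' hb' => ?_⟩⟩
  exact eq_of_forall_lt_iff fun c' => by simp [hdiag, hb']

variable (hb : lam.part b = c + 1) (hmu : mu.part = Function.update lam.part b c)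
include hb hmu

theorem removable_of_part_eq_update : lam.Removable b c := by
  refine ⟨hb, ?_⟩
  simpa [hmu] using mu.antitone b.le_succ

/- Removing `(b, c)` can stop `(b, c + 1)` and `(b + 1, c)` from being addable and can make
`(b, c - 1)` and `(b - 1, c)` removable. The contents of these nodes are excluded below. -/
variable {b' c' : ℕ} (hright : (c' : ℤ) - b' ≠ c - b + 1) (hleft : (c : ℤ) - b ≠ c' - b' + 1)
include hright hleft

theorem addable_iff_of_part_eq_update :
    mu.Addable b' c' ↔ (b', c') = (b, c) ∨ lam.Addable b' c' := by
  have hanti := lam.antitone (Nat.sub_le b 1)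
  simp only [Addable, hmu, Function.update_apply, Prod.mk.injEq]
  grind

theorem removable_iff_of_part_eq_update :
    mu.Removable b' c' ↔ lam.Removable b' c' ∧ (b', c') ≠ (b, c) := by
  simp only [Removable, hmu, Function.update_apply, ne_eq, Prod.mk.injEq]
  grind

end PartitionFun

section Residues

variable {r : ℕ}

/-- The node `y` is an `i`-node: its residue `a_j + c - b` is `i` modulo `e`.
For `e = 0` residues are compared in `ℤ`, since `x % 0 = x`. -/
def HasResidue (e : ℕ) (a : Fin r → ℤ) (i : ℤ) (y : Node r) : Prop :=
  (a y.2.2 + (y.2.1 : ℤ) - (y.1 : ℤ)) % (e : ℤ) = i % e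

/-- The set of addable `i`-nodes of `lam`. -/
def addableNodes (e : ℕ) (a : Fin r → ℤ) (lam : Multipartition r) (i : ℤ) : Set (Node r) :=
  {y | (lam y.2.2).Addable y.1 y.2.1 ∧ HasResidue e a i y}

/-- The set of removable `i`-nodes of `lam`. -/
def removableNodes (e : ℕ) (a : Fin r → ℤ) (lam : Multipartition r) (i : ℤ) : Set (Node r) :=
  {y | (lam y.2.2).Removable y.1 y.2.1 ∧ HasResidue e a i y}

/-- The set of nodes below `x`. -/
def nodesBelow (x : Node r) : Set (Node r) := {y | NodeAbove x y}

variable {e : ℕ} {a : Fin r → ℤ} {i : ℤ} {lam : Multipartition r}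

theorem HasResidue.content_ne_add_one {b b' c c' : ℕ} {j : Fin r} (he : e ≠ 1)
    (hx : HasResidue e a i (b, c, j)) (hy : HasResidue e a i (b', c', j)) :
    (c' : ℤ) - b' ≠ c - b + 1 := by
  intro h
  have hdvd : (e : ℤ) ∣ (a j + c' - b') - (a j + c - b) := Int.ModEq.dvd (hx.trans hy.symm)
  rw [show (a j + c' - b') - (a j + c - b) = 1 by linarith] at hdvd
  exact he (Nat.dvd_one.1 (by exact_mod_cast hdvd))

theorem finite_diag (lam : Multipartition r) : (diag lam).Finite := by
  choose N hN using fun j => (lam j).finite_support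
  refine (Set.finite_iUnion fun j => ((Set.finite_Iio (N j)).prod
    ((Set.finite_Iio ((lam j).part 0)).prod (Set.finite_singleton j)))).subset ?_
  rintro ⟨b, c, j⟩ (hc : c < (lam j).part b)
  have hb : b < N j := by
    by_contra! h
    simp [hN j b h] at hc
  exact Set.mem_iUnion.2 ⟨j, hb, hc.trans_le ((lam j).antitone b.zero_le), rfl⟩

theorem removableNodes_subset_diag : removableNodes e a lam i ⊆ diag lam := by
  rintro y ⟨⟨hy, -⟩, -⟩
  exact Nat.lt_of_succ_le hy.ge

theorem finite_removableNodes : (removableNodes e a lam i).Finite :=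
  (finite_diag lam).subset removableNodes_subset_diag

theorem disjoint_addableNodes_diag : Disjoint (addableNodes e a lam i) (diag lam) :=
  Set.disjoint_left.2 fun _ hadd hdiag => hdiag.ne' hadd.1.1

theorem finite_addableNodes : (addableNodes e a lam i).Finite := by
  choose N hN using fun j => (lam j).finite_support
  refine (Set.finite_iUnion fun j => (Set.finite_Iic (N j)).image
    fun b => ((b, (lam j).part b, j) : Node r)).subset ?_
  rintro ⟨b, c, j⟩ ⟨⟨hc, hb⟩, -⟩
  refine Set.mem_iUnion.2 ⟨j, b, ?_, by simpa using hc⟩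
  by_contra h
  have := hN j (b - 1) (by grind)
  grind

end Residues

section Removal

variable {e r : ℕ} {a : Fin r → ℤ} {i : ℤ} {lam mu : Multipartition r} {B : Node r}

theorem Nfac_eq_ncard_inter (e : ℕ) (a : Fin r → ℤ) (lam : Multipartition r) (i : ℤ) (x : Node r) :
    Nfac e a lam i x = ((addableNodes e a lam i ∩ nodesBelow x).ncard : ℤ) -
      (removableNodes e a lam i ∩ nodesBelow x).ncard := by
  simp only [Nfac, addableNodes, removableNodes, HasResidue, nodesBelow, Set.inter_def,
    Set.mem_ofPred_eq, and_assoc]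

theorem component_eq_of_diag_eq_sdiff (hdiag : diag mu = diag lam \ {B}) {j : Fin r}
    (hj : j ≠ B.2.2) : mu j = lam j := by
  have hpart : (mu j).part = (lam j).part := by
    funext b
    refine eq_of_forall_lt_iff fun c => ?_
    have h := Set.ext_iff.1 hdiag (b, c, j)
    have hne : (b, c, j) ≠ B := by rintro rfl; exact hj rfl
    simpa [diag, PartitionFun.InDiag, hne] using h
  cases hmu : mu j
  cases hlam : lam j
  simp_all

variable (hB : B ∈ diag lam) (hdiag : diag mu = diag lam \ {B})
include hB hdiag

theorem part_eq_of_diag_eq_sdiff : (lam B.2.2).part B.1 = B.2.1 + 1 ∧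
    (mu B.2.2).part = Function.update (lam B.2.2).part B.1 B.2.1 := by
  refine PartitionFun.part_eq_of_inDiag_iff hB fun b c => ?_
  obtain ⟨b₀, c₀, j⟩ := B
  simpa [diag] using Set.ext_iff.1 hdiag (b, c, j)

variable (hres : HasResidue e a i B)
include hres

theorem mem_removableNodes_of_diag_eq_sdiff : B ∈ removableNodes e a lam i :=
  have ⟨hlam, hmu⟩ := part_eq_of_diag_eq_sdiff hB hdiag
  ⟨PartitionFun.removable_of_part_eq_update hlam hmu, hres⟩

variable (he : e ≠ 1)
include he

theorem addableNodes_of_diag_eq_sdiff :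
    addableNodes e a mu i = insert B (addableNodes e a lam i) := by
  have ⟨hlam, hmu⟩ := part_eq_of_diag_eq_sdiff hB hdiag
  ext ⟨b, c, j⟩
  by_cases hy : HasResidue e a i (b, c, j)
  · by_cases hj : j = B.2.2
    · obtain ⟨b₀, c₀, j₀⟩ := B
      subst hj
      have hright := hres.content_ne_add_one he hy
      have hleft := hy.content_ne_add_one he hres
      simpa [addableNodes, hy] using
        PartitionFun.addable_iff_of_part_eq_update hlam hmu hright hleft
    · have hne : (b, c, j) ≠ B := by rintro rfl; exact hj rfl
      simp [addableNodes, component_eq_of_diag_eq_sdiff hdiag hj, hne]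
  · have hne : (b, c, j) ≠ B := by rintro rfl; exact hy hres
    simp [addableNodes, hy, hne]

theorem removableNodes_of_diag_eq_sdiff :
    removableNodes e a mu i = removableNodes e a lam i \ {B} := by
  have ⟨hlam, hmu⟩ := part_eq_of_diag_eq_sdiff hB hdiag
  ext ⟨b, c, j⟩
  by_cases hy : HasResidue e a i (b, c, j)
  · by_cases hj : j = B.2.2
    · obtain ⟨b₀, c₀, j₀⟩ := B
      subst hj
      have hright := hres.content_ne_add_one he hy
      have hleft := hy.content_ne_add_one he hres
      simpa [removableNodes, hy] using
        PartitionFun.removable_iff_of_part_eq_update hlam hmu hright hleft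
    · have hne : (b, c, j) ≠ B := by rintro rfl; exact hj rfl
      simp [removableNodes, component_eq_of_diag_eq_sdiff hdiag hj, hne]
  · simp [removableNodes, hy]

theorem Nfac_of_diag_eq_sdiff (x : Node r) :
    Nfac e a mu i x = Nfac e a lam i x + if NodeAbove x B then 2 else 0 := by
  have hrem := mem_removableNodes_of_diag_eq_sdiff hB hdiag hres
  have hadd : B ∉ addableNodes e a lam i := fun h =>
    disjoint_addableNodes_diag.notMem_of_mem_left h hB
  rw [Nfac_eq_ncard_inter, Nfac_eq_ncard_inter, addableNodes_of_diag_eq_sdiff hB hdiag hres he,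
    removableNodes_of_diag_eq_sdiff hB hdiag hres he, ← Set.inter_sdiff_right_comm]
  split_ifs with hx
  · rw [Set.insert_inter_of_mem (show B ∈ nodesBelow x from hx),
      Set.ncard_insert_of_notMem (fun h => hadd h.1) (finite_addableNodes.inter_of_left _),
      ← Set.ncard_sdiff_singleton_add_one (Set.mem_inter hrem hx)
        (finite_removableNodes.inter_of_left _)]
    push_cast
    ring
  · rw [Set.insert_inter_of_notMem (show B ∉ nodesBelow x from hx),
      Set.sdiff_singleton_eq_self fun h => hx h.2, add_zero]

end Removal

section RemovalSequence

variable {e r d : ℕ} {a : Fin r → ℤ} {i : ℤ} {lamSeq : ℕ → Multipartition r} {B : Fin d → Node r}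
  (hstep : ∀ m : Fin d, diag (lamSeq ((m : ℕ) + 1)) = diag (lamSeq (m : ℕ)) \ {B m})
include hstep

theorem mem_diag_of_forall_lt_ne {x : Node r} (hx : x ∈ diag (lamSeq 0)) {m : ℕ} (hm : m ≤ d)
    (hne : ∀ q : Fin d, (q : ℕ) < m → x ≠ B q) : x ∈ diag (lamSeq m) := by
  induction m with
  | zero => exact hx
  | succ m ih =>
    rw [hstep ⟨m, hm⟩]
    exact ⟨ih (by omega) fun q hq => hne q (by omega), hne ⟨m, hm⟩ m.lt_succ_self⟩

theorem Nfac_removalSequence (he : e ≠ 1) (hB : ∀ m, B m ∈ diag (lamSeq 0))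
    (hinj : Function.Injective B) (hres : ∀ m, HasResidue e a i (B m)) (x : Node r) (m : Fin d) :
    Nfac e a (lamSeq m) i x =
      Nfac e a (lamSeq 0) i x + 2 * #{q ∈ Iio m | NodeAbove x (B q)} := by
  have hmem (q : Fin d) : B q ∈ diag (lamSeq q) :=
    mem_diag_of_forall_lt_ne hstep (hB q) q.2.le fun _ hlt => hinj.ne (Fin.ne_of_gt hlt)
  rw [eq_add_sum_Iio (f := fun n => Nfac e a (lamSeq n) i x)
    fun q => Nfac_of_diag_eq_sdiff (hmem q) (hstep q) (hres q) he x]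
  simp [← sum_filter, mul_comm]

end RemovalSequence

section Enumeration

variable {e r d : ℕ} {a : Fin r → ℤ} {i : ℤ} {lam : Multipartition r} {A : Fin d → Node r}
  (hmono : ∀ p q : Fin d, p < q → NodeLT (A p) (A q))
include hmono

theorem strictAnti_toLex :
    StrictAnti fun p => toLex ((A p).2.2, (A p).1) := fun p q hpq =>
  Prod.Lex.toLex_lt_toLex.2 (hmono p q hpq)

theorem nodeAbove_iff_lt {p q : Fin d} : NodeAbove (A p) (A q) ↔ q < p :=
  Prod.Lex.toLex_lt_toLex.symm.trans (strictAnti_toLex hmono).lt_iff_gt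

theorem injective_of_nodeLT : Function.Injective A :=
  .of_comp (f := fun y : Node r => toLex (y.2.2, y.1)) (strictAnti_toLex hmono).injective

theorem ncard_range_inter_below (p : Fin d) :
    (Set.range A ∩ nodesBelow (A p)).ncard = p := by
  have himage : Set.range A ∩ nodesBelow (A p) = A '' Set.Iio p := by
    rw [Set.inter_comm, ← Set.image_preimage_eq_inter_range]
    congr 1
    ext q
    exact nodeAbove_iff_lt hmono
  rw [himage, Set.ncard_image_of_injective _ (injective_of_nodeLT hmono), ← coe_Iio,
    Set.ncard_coe_finset, Fin.card_Iio]

theorem sum_Nfac_removal (he : e ≠ 1) (hA : ∀ p, A p ∈ removableNodes e a lam i)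
    (σ : Equiv.Perm (Fin d)) {lamSeq : ℕ → Multipartition r} (h0 : lamSeq 0 = lam)
    (hstep : ∀ m : Fin d,
      diag (lamSeq ((m : ℕ) + 1)) = diag (lamSeq (m : ℕ)) \ {A (σ m)}) :
    ∑ m : Fin d, Nfac e a (lamSeq (m : ℕ)) i (A (σ m)) =
      ∑ p, Nfac e a lam i (A p) + 2 * ((d.choose 2 : ℤ) - permLength d σ) := by
  subst h0
  have hseq (m : Fin d) : Nfac e a (lamSeq m) i (A (σ m)) =
      Nfac e a (lamSeq 0) i (A (σ m)) + 2 * #{q ∈ Iio m | σ q < σ m} := by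
    simp only [← nodeAbove_iff_lt hmono]
    exact Nfac_removalSequence hstep he (fun q => removableNodes_subset_diag (hA (σ q)))
      ((injective_of_nodeLT hmono).comp σ.injective) (fun q => (hA (σ q)).2) _ m
  rw [sum_congr rfl fun m _ => hseq m, sum_add_distrib, ← mul_sum,
    Equiv.sum_comp σ fun p => Nfac e a (lamSeq 0) i (A p),
    ← sum_card_noninversions_add_permLength σ]
  push_cast
  ring

theorem sum_Nfac_eq (hrange : Set.range A = removableNodes e a lam i) :
    ∑ p, Nfac e a lam i (A p) =
      ∑ p, ((addableNodes e a lam i ∩ nodesBelow (A p)).ncard : ℤ) - d.choose 2 := by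
  simp only [Nfac_eq_ncard_inter, ← hrange, ncard_range_inter_below hmono, sum_sub_distrib]
  rw [← Nat.cast_sum univ fun p : Fin d => (p : ℕ), sum_fin_val_eq_choose_two]

end Enumeration

theorem stmt_14_general {e r : ℕ} (he : e ≠ 1) (a : Fin r → ℤ) (lam : Multipartition r) (i : ℤ)
    (d : ℕ) (A : Fin d → Node r) (hmono : ∀ p q : Fin d, p < q → NodeLT (A p) (A q))
    (hrange : Set.range A = removableNodes e a lam i) (σ : Equiv.Perm (Fin d))
    (lamSeq : ℕ → Multipartition r) (h0 : lamSeq 0 = lam)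
    (hstep : ∀ m : Fin d,
      diag (lamSeq ((m : ℕ) + 1)) = diag (lamSeq (m : ℕ)) \ {A (σ m)}) :
    ∑ m : Fin d, Nfac e a (lamSeq (m : ℕ)) i (A (σ m)) =
      ((d * (d - 1) / 2 : ℕ) : ℤ) - 2 * (permLength d σ : ℤ) +
        ∑ p, ((addableNodes e a lam i ∩ nodesBelow (A p)).ncard : ℤ) := by
  have hA (p : Fin d) : A p ∈ removableNodes e a lam i := hrange ▸ Set.mem_range_self p
  rw [sum_Nfac_removal hmono he hA σ h0 hstep, sum_Nfac_eq hmono hrange, ← Nat.choose_two_right]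
  ring

/-- degree-shift computation from the proof of Proposition 5.4:
if `λ` has no addable `i`-nodes and exactly `δ` removable `i`-nodes
`A_1 < ⋯ < A_δ`, and they are removed in the order given by a permutation `σ`
of length `k`, then the total shift is `δ(δ−1)/2 − 2k`. -/
theorem stmt_14 {e r : ℕ} (he : 2 ≤ e) (hr : 0 < r) (a : Fin r → ℤ)
    (lam : Multipartition r) (i : ℤ)
    (hnoadd : ∀ y : Node r, ¬((lam y.2.2).Addable y.1 y.2.1 ∧
      (a y.2.2 + (y.2.1 : ℤ) - (y.1 : ℤ)) % (e : ℤ) = i % e))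
    (d : ℕ) (A : Fin d → Node r)
    (hmono : ∀ p q : Fin d, p < q → NodeLT (A p) (A q))
    (hrange : Set.range A = {y : Node r | (lam y.2.2).Removable y.1 y.2.1 ∧
      (a y.2.2 + (y.2.1 : ℤ) - (y.1 : ℤ)) % (e : ℤ) = i % e})
    (σ : Equiv.Perm (Fin d)) (k : ℕ) (hk : permLength d σ = k)
    (lamSeq : ℕ → Multipartition r) (h0 : lamSeq 0 = lam)
    (hstep : ∀ m : Fin d,
      diag (lamSeq ((m : ℕ) + 1)) = diag (lamSeq (m : ℕ)) \ {A (σ m)}) :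
    ∑ m : Fin d, Nfac e a (lamSeq (m : ℕ)) i (A (σ m)) =
      ((d * (d - 1) / 2 : ℕ) : ℤ) - 2 * (k : ℤ) := by
  have hempty : addableNodes e a lam i = ∅ := Set.eq_empty_of_forall_notMem hnoadd
  simpa [hempty, hk] using
    stmt_14_general (by omega) a lam i d A hmono hrange σ lamSeq h0 hstep

end AK
end

section
/- Suppose λ is an r-multipartition of n and μ is an r-multipartition of m, and that λ and μ have the same hub. Then m ≡ n (mod e) and w(λ) − w(μ) = r(n − m)/e. -/
/-!
Combinatorial framework for multipartitions, residues, β-sets, abacus levels,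
weights, hubs, core blocks and Scopes-type moves, following Fayers and the paper.
Rows and columns of Young diagrams are indexed from 0, so the node in row `b`
and column `c` (0-based) of component `j` has residue `a j + c - b` mod `e`.
-/

open scoped Classical

namespace AK

/-!
Fix a partition and a function `f` on contents. Summing the second difference
`2 f(x) - f(x - 1) - f(x + 1)` over the nodes of a row telescopes to boundary terms at its two ends,
and summing these over the rows leaves the removable nodes minus the addable nodes, up to `f 0`.
Taking for `f` the indicator of a residue gives
`δ_i(λ) = 2 c_i(λ) - c_{i-1}(λ) - c_{i+1}(λ) - #{j | a_j ≡ i}`.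
So if `λ` and `μ` have the same hub, then `i ↦ c_i(λ) - c_i(μ)` is an `e`-periodic function on `ℤ`
with vanishing second difference, hence a constant `d`. Summing over the residues gives
`n - m = e d`, and in `w(λ) - w(μ)` the squares cancel, leaving `r d`.
-/

section Cartan

variable {G : Type*} [AddCommGroup G]

/-- The operator on functions `ℤ → G` given by the Cartan matrix of type `A_∞` (a negated second
difference). On `e`-periodic functions it is the Cartan matrix of the affine type `A_{e-1}`, which
expresses the hub in terms of the numbers of nodes of each residue. -/
def cartan (f : ℤ → G) (x : ℤ) : G :=
  2 • f x - f (x - 1) - f (x + 1)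

lemma cartan_sub (f g : ℤ → G) (x : ℤ) :
    cartan (fun y => f y - g y) x = cartan f x - cartan g x := by
  simp only [cartan]
  abel

lemma cartan_sum {ι : Type*} (s : Finset ι) (f : ι → ℤ → G) (x : ℤ) :
    cartan (fun y => ∑ k ∈ s, f k y) x = ∑ k ∈ s, cartan (f k) x := by
  simp only [cartan, Finset.sum_sub_distrib, Finset.smul_sum]

lemma cartan_comp_const_add (f : ℤ → G) (s x : ℤ) :
    cartan (fun y => f (s + y)) x = cartan f (s + x) := by
  simp only [cartan, add_sub_assoc, add_assoc]

lemma sum_range_cartan (f : ℤ → G) (s : ℤ) (n : ℕ) :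
    ∑ c ∈ Finset.range n, cartan f (s + c) = (f s - f (s - 1)) - (f (s + n) - f (s + n - 1)) := by
  have cartan_eq_sub (c : ℕ) : cartan f (s + c) =
      (f (s + c) - f (s + c - 1)) - (f (s + (c + 1 : ℕ)) - f (s + (c + 1 : ℕ) - 1)) := by
    rw [Nat.cast_add_one, ← add_assoc, add_sub_cancel_right, cartan]
    abel
  simp only [cartan_eq_sub]
  simpa using Finset.sum_range_sub' (fun c : ℕ => f (s + c) - f (s + c - 1)) n

lemma apply_eq_apply_zero_of_periodic_one {α : Type*} {f : ℤ → α} (hf : Function.Periodic f 1)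
    (i : ℤ) : f i = f 0 := by
  simpa using hf.int_mul_eq i

lemma apply_eq_apply_zero_of_cartan_eq_zero [IsAddTorsionFree G] {e : ℕ} (he : e ≠ 0) {f : ℤ → G}
    (hper : Function.Periodic f e) (hf : ∀ i, cartan f i = 0) (i : ℤ) : f i = f 0 := by
  have diff_const (i : ℤ) : f (i + 1) - f i = f 1 - f 0 := by
    refine apply_eq_apply_zero_of_periodic_one (f := fun i => f (i + 1) - f i) (fun i => ?_) i
    have h := hf (i + 1)
    rw [cartan, add_sub_cancel_right, two_nsmul] at h
    rwa [sub_sub, add_sub_add_comm, ← neg_sub (f (i + 1 + 1)), ← sub_eq_add_neg, sub_eq_zero,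
      eq_comm] at h
  have diff_eq_zero : f 1 - f 0 = 0 := by
    have nsmul_diff : e • (f 1 - f 0) = f e - f 0 := by
      simpa only [Nat.cast_add_one, diff_const, Finset.sum_const, Finset.card_range,
        Nat.cast_zero] using Finset.sum_range_sub (fun k : ℕ => f k) e
    have apply_e : f e = f 0 := by simpa using hper 0
    rwa [apply_e, sub_self, nsmul_eq_zero_iff_right he] at nsmul_diff
  exact apply_eq_apply_zero_of_periodic_one
    (fun i => sub_eq_zero.1 ((diff_const i).trans diff_eq_zero)) i

end Cartan

/-- The content of the node in row `p.1` and column `p.2`; adding the charge of the component gives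
the residue before reduction mod `e`. -/
def content (p : ℕ × ℕ) : ℤ :=
  p.2 - p.1

namespace PartitionFun

variable (lam : PartitionFun)

/-- The number of non-zero parts, as the least row index from which on all parts vanish. -/
noncomputable def length : ℕ :=
  Nat.find lam.finite_support

lemma part_eq_zero {b : ℕ} (hb : lam.length ≤ b) : lam.part b = 0 :=
  Nat.find_spec lam.finite_support b hb

lemma lt_length {b : ℕ} (hb : 0 < lam.part b) : b < lam.length := by
  by_contra! h
  exact hb.ne' (lam.part_eq_zero h)

/-- The Young diagram as a finset. -/
noncomputable def nodes : Finset (ℕ × ℕ) :=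
  {p ∈ Finset.range lam.length ×ˢ Finset.range (lam.part 0) | lam.InDiag p.1 p.2}

lemma mem_nodes {p : ℕ × ℕ} : p ∈ lam.nodes ↔ lam.InDiag p.1 p.2 := by
  simp only [nodes, Finset.mem_filter, Finset.mem_product, Finset.mem_range, and_iff_right_iff_imp]
  exact fun h => ⟨lam.lt_length (Nat.zero_lt_of_lt h), h.trans_le (lam.antitone p.1.zero_le)⟩

/-- The removable nodes as a finset. -/
noncomputable def removableNodes : Finset (ℕ × ℕ) :=
  {p ∈ lam.nodes | lam.Removable p.1 p.2}

lemma mem_removableNodes {p : ℕ × ℕ} : p ∈ lam.removableNodes ↔ lam.Removable p.1 p.2 := by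
  simp only [removableNodes, Finset.mem_filter, mem_nodes, and_iff_right_iff_imp]
  exact fun h => Nat.lt_of_succ_le h.1.ge

/-- The addable nodes as a finset. -/
noncomputable def addableNodes : Finset (ℕ × ℕ) :=
  {p ∈ Finset.range (lam.length + 1) ×ˢ Finset.range (lam.part 0 + 1) | lam.Addable p.1 p.2}

lemma mem_addableNodes {p : ℕ × ℕ} : p ∈ lam.addableNodes ↔ lam.Addable p.1 p.2 := by
  simp only [addableNodes, Finset.mem_filter, Finset.mem_product, Finset.mem_range,
    Nat.lt_succ_iff, and_iff_right_iff_imp]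
  rintro ⟨hpart, hrow⟩
  refine ⟨?_, hpart ▸ lam.antitone p.1.zero_le⟩
  rcases hrow with hzero | hlt
  · omega
  · have := lam.lt_length (Nat.zero_lt_of_lt hlt)
    omega

variable {M : Type*} [AddCommMonoid M]

lemma sum_nodes (f : ℕ × ℕ → M) :
    ∑ p ∈ lam.nodes, f p =
      ∑ b ∈ Finset.range lam.length, ∑ c ∈ Finset.range (lam.part b), f (b, c) := by
  refine Finset.sum_finset_product _ _ _ fun p => ?_
  simp only [mem_nodes, InDiag, Finset.mem_range, iff_and_self]
  exact fun h => lam.lt_length (Nat.zero_lt_of_lt h)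

lemma sum_removableNodes (f : ℤ → M) :
    ∑ p ∈ lam.removableNodes, f (content p) =
      ∑ b ∈ Finset.range lam.length,
        if lam.part (b + 1) < lam.part b then f (lam.part b - b - 1) else 0 := by
  rw [Finset.sum_finset_product _ (Finset.range lam.length)
    (fun b => if lam.part (b + 1) < lam.part b then {lam.part b - 1} else ∅)]
  · refine Finset.sum_congr rfl fun b _ => ?_
    split_ifs with h
    · rw [Finset.sum_singleton, content, Nat.cast_pred (Nat.zero_lt_of_lt h), sub_right_comm]
    · rfl
  · rintro ⟨b, c⟩
    have := lam.lt_length (b := b)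
    simp only [mem_removableNodes, Removable, Finset.mem_range]
    split_ifs <;>
      simp only [Finset.mem_singleton, Finset.notMem_empty, and_false, iff_false] <;> omega

lemma sum_addableNodes (f : ℤ → M) :
    ∑ p ∈ lam.addableNodes, f (content p) =
      (∑ b ∈ Finset.range lam.length, if lam.part (b + 1) < lam.part b then
        f (lam.part (b + 1) - (b + 1 : ℕ)) else 0) + f (lam.part 0) := by
  rw [Finset.sum_finset_product _ (Finset.range (lam.length + 1))
    (fun b => if b = 0 ∨ lam.part b < lam.part (b - 1) then {lam.part b} else ∅),
    Finset.sum_range_succ']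
  · congr 1
    · refine Finset.sum_congr rfl fun b _ => ?_
      simp only [Nat.add_eq_zero_iff, one_ne_zero, and_false, false_or, Nat.add_sub_cancel]
      split_ifs <;> simp [content]
    · simp [content]
  · rintro ⟨b, c⟩
    have := lam.lt_length (b := b - 1)
    simp only [mem_addableNodes, Addable, Finset.mem_range]
    split_ifs <;>
      simp only [Finset.mem_singleton, Finset.notMem_empty, and_false, iff_false] <;> omega

variable {G : Type*} [AddCommGroup G]

-- In a row `b` whose last node is not removable, that node has the content of the first free
-- position of row `b + 1`, so it may be added to both sums without changing the difference.
lemma sum_removableNodes_sub_sum_addableNodes (f : ℤ → G) :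
    ∑ p ∈ lam.removableNodes, f (content p) - ∑ p ∈ lam.addableNodes, f (content p) =
      ∑ b ∈ Finset.range lam.length, f (lam.part b - b - 1) -
        ∑ b ∈ Finset.range (lam.length + 1), f (lam.part b - b) := by
  rw [sum_removableNodes, sum_addableNodes, Finset.sum_range_succ', Nat.cast_zero, sub_zero,
    ← sub_sub, ← sub_sub, ← Finset.sum_sub_distrib, ← Finset.sum_sub_distrib]
  congr 1
  refine Finset.sum_congr rfl fun b _ => ?_
  split_ifs with h
  · rfl
  · have part_eq : lam.part (b + 1) = lam.part b :=
      (lam.antitone b.le_succ).antisymm (not_lt.1 h)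
    rw [part_eq, Nat.cast_add_one, ← sub_sub, sub_self, sub_self]

lemma sum_nodes_cartan (f : ℤ → G) :
    ∑ p ∈ lam.nodes, cartan f (content p) =
      ∑ p ∈ lam.removableNodes, f (content p) - ∑ p ∈ lam.addableNodes, f (content p) + f 0 := by
  have row_sum (b : ℕ) : ∑ c ∈ Finset.range (lam.part b), cartan f (content (b, c)) =
      (f (-b) - f (-(b + 1 : ℕ))) - (f (lam.part b - b) - f (lam.part b - b - 1)) := by
    have := sum_range_cartan f (-b) (lam.part b)
    simpa only [content, neg_add_eq_sub, Nat.cast_add_one, neg_add, ← sub_eq_add_neg] using this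
  have left_ends : ∑ b ∈ Finset.range lam.length, (f (-b) - f (-(b + 1 : ℕ))) =
      f 0 - f (-lam.length) := by
    simpa using Finset.sum_range_sub' (fun b : ℕ => f (-b)) lam.length
  simp only [sum_nodes, row_sum, Finset.sum_sub_distrib (f := fun b : ℕ => f (-b) - _), left_ends]
  rw [sum_removableNodes_sub_sum_addableNodes, Finset.sum_range_succ, lam.part_eq_zero le_rfl,
    Finset.sum_sub_distrib, Nat.cast_zero, zero_sub]
  abel

end PartitionFun

/-- The indicator function of the residue class of `i` mod `e`. -/
def residueIndicator (e : ℕ) (i x : ℤ) : ℤ :=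
  if x % e = i % e then 1 else 0

lemma residueIndicator_add_right (e : ℕ) (i x k : ℤ) :
    residueIndicator e (i + k) (x + k) = residueIndicator e i x :=
  if_congr ⟨Int.ModEq.add_right_cancel' k, Int.ModEq.add_right k⟩ rfl rfl

lemma cartan_residueIndicator_left (e : ℕ) (i x : ℤ) :
    cartan (fun k => residueIndicator e k x) i = cartan (residueIndicator e i) x := by
  have left_pred := residueIndicator_add_right e (i - 1) x 1
  have left_succ := residueIndicator_add_right e i (x - 1) 1
  rw [sub_add_cancel] at left_pred left_succ
  simp only [cartan, ← left_pred, left_succ, sub_right_comm]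

section Count

variable {α : Type*} {s : Finset α} {P : α → Prop}

lemma ncard_setOf_and (hs : ∀ x, x ∈ s ↔ P x) (Q : α → Prop)
    [DecidablePred Q] :
    {x | P x ∧ Q x}.ncard = (s.filter Q).card := by
  rw [← Set.ncard_coe_finset]
  congr 1
  ext x
  simp [hs]

lemma ncard_setOf_and_modEq (hs : ∀ x, x ∈ s ↔ P x) (e : ℕ) (i : ℤ) (g : α → ℤ) :
    ({x | P x ∧ g x % e = i % e}.ncard : ℤ) = ∑ x ∈ s, residueIndicator e i (g x) := by
  rw [ncard_setOf_and hs, Finset.card_filter, Nat.cast_sum]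
  simp only [residueIndicator, Nat.cast_ite, Nat.cast_one, Nat.cast_zero]

end Count

section Multipartition

variable {r : ℕ} (e : ℕ) (a : Fin r → ℤ) (lam mu : Multipartition r)

/-- The Young diagram of a multipartition as a finset, assembled from those of the components. -/
noncomputable def diagFinset : Finset (Node r) :=
  (Finset.univ.sigma fun j => (lam j).nodes).map
    ((Equiv.sigmaEquivProd (Fin r) (ℕ × ℕ)).trans
      ((Equiv.prodComm _ _).trans (Equiv.prodAssoc _ _ _))).toEmbedding

lemma mem_diagFinset {x : Node r} : x ∈ diagFinset lam ↔ (lam x.2.2).InDiag x.1 x.2.1 := by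
  obtain ⟨b, c, j⟩ := x
  simp [diagFinset, PartitionFun.mem_nodes]

lemma msize_eq_card_diagFinset : msize lam = (diagFinset lam).card := by
  rw [msize, ← Set.ncard_coe_finset]
  congr 1
  ext x
  exact (mem_diagFinset lam).symm

lemma nodeCount_eq_sum (i : ℤ) : (nodeCount e a lam i : ℤ) =
    ∑ j, ∑ p ∈ (lam j).nodes, residueIndicator e i (a j + content p) := by
  rw [nodeCount, ncard_setOf_and_modEq fun _ => mem_diagFinset lam, diagFinset, Finset.sum_map,
    Finset.sum_sigma]
  simp [content, add_sub_assoc]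

lemma removableCount_eq_sum_s15 (i : ℤ) (j : Fin r) : (removableCount e a lam i j : ℤ) =
    ∑ p ∈ (lam j).removableNodes, residueIndicator e i (a j + content p) := by
  simp only [removableCount, content, ← add_sub_assoc]
  exact ncard_setOf_and_modEq (fun _ => (lam j).mem_removableNodes) e i _

lemma addableCount_eq_sum_s15 (i : ℤ) (j : Fin r) : (addableCount e a lam i j : ℤ) =
    ∑ p ∈ (lam j).addableNodes, residueIndicator e i (a j + content p) := by
  simp only [addableCount, content, ← add_sub_assoc]
  exact ncard_setOf_and_modEq (fun _ => (lam j).mem_addableNodes) e i _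

lemma delta_eq_sum_cartan (i : ℤ) (j : Fin r) : delta e a lam i j =
    ∑ p ∈ (lam j).nodes, cartan (residueIndicator e i) (a j + content p) -
      residueIndicator e i (a j) := by
  have h := (lam j).sum_nodes_cartan fun x => residueIndicator e i (a j + x)
  simp only [cartan_comp_const_add, add_zero] at h
  rw [delta, removableCount_eq_sum_s15, addableCount_eq_sum_s15, h, add_sub_cancel_right]

theorem hub_eq_cartan_nodeCount (i : ℤ) : hub e a lam i =
    cartan (fun k => (nodeCount e a lam k : ℤ)) i - ∑ j, residueIndicator e i (a j) := by
  simp only [hub, delta_eq_sum_cartan, Finset.sum_sub_distrib, nodeCount_eq_sum, cartan_sum,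
    cartan_residueIndicator_left]

lemma nodeCount_periodic : Function.Periodic (nodeCount e a lam) e := fun i => by
  simp only [nodeCount, Int.add_emod_right]

variable {e} {lam mu}

lemma msize_eq_sum_nodeCount (he : e ≠ 0) :
    msize lam = ∑ i ∈ Finset.range e, nodeCount e a lam i := by
  let residue (x : Node r) : ℤ := a x.2.2 + x.2.1 - x.1
  have residue_mem (x : Node r) : (residue x % e).toNat ∈ Finset.range e := by
    have := Int.emod_lt_of_pos (residue x) (by omega : (0 : ℤ) < e)
    rw [Finset.mem_range]
    omega
  rw [msize_eq_card_diagFinset, Finset.card_eq_sum_card_fiberwise fun x _ => residue_mem x]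
  refine Finset.sum_congr rfl fun i hi => ?_
  rw [nodeCount, ncard_setOf_and fun _ => mem_diagFinset lam]
  congr 1
  refine Finset.filter_congr fun x _ => ?_
  have := Int.emod_nonneg (residue x) (by omega : (e : ℤ) ≠ 0)
  rw [Int.emod_eq_of_lt i.cast_nonneg (by simpa using hi)]
  change (residue x % e).toNat = i ↔ residue x % e = i
  omega

variable {a}

theorem SameHub.exists_nodeCount_eq_add (he : e ≠ 0) (h : SameHub e a lam mu) :
    ∃ d : ℤ, ∀ i, (nodeCount e a lam i : ℤ) = nodeCount e a mu i + d := by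
  let diff (i : ℤ) : ℤ := nodeCount e a lam i - nodeCount e a mu i
  have diff_periodic : Function.Periodic diff e := fun i => by
    simp only [diff, nodeCount_periodic e a _ i]
  have cartan_diff (i : ℤ) : cartan diff i = 0 := by
    have hi := h i
    rw [hub_eq_cartan_nodeCount, hub_eq_cartan_nodeCount, sub_left_inj] at hi
    rw [cartan_sub, hi, sub_self]
  exact ⟨diff 0, fun i => sub_eq_iff_eq_add'.1
    (apply_eq_apply_zero_of_cartan_eq_zero he diff_periodic cartan_diff i)⟩

lemma msize_eq_add_of_nodeCount_eq_add (he : e ≠ 0) {d : ℤ}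
    (h : ∀ i, (nodeCount e a lam i : ℤ) = nodeCount e a mu i + d) :
    (msize lam : ℤ) = msize mu + e * d := by
  rw [msize_eq_sum_nodeCount a he, msize_eq_sum_nodeCount a he, Nat.cast_sum, Nat.cast_sum]
  simp only [h, Finset.sum_add_distrib, Finset.sum_const, Finset.card_range, nsmul_eq_mul]

lemma weight_sub_weight_of_nodeCount_eq_add {d : ℤ}
    (h : ∀ i, (nodeCount e a lam i : ℤ) = nodeCount e a mu i + d) :
    weight e a lam - weight e a mu = r * d := by
  have h_rat (i : ℤ) : (nodeCount e a lam i : ℚ) = nodeCount e a mu i + d := mod_cast h i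
  simp only [weight, h_rat, add_sub_add_right_eq_sub, sub_sub_sub_cancel_right,
    Finset.sum_add_distrib, add_sub_cancel_left, Finset.sum_const, Finset.card_univ,
    Fintype.card_fin, nsmul_eq_mul]

end Multipartition

/-- Proposition 3.2(1): if `λ` is a multipartition of `n` and `μ`
a multipartition of `m` with the same hub, then `m ≡ n (mod e)` and
`w(λ) − w(μ) = r(n − m)/e`. -/
theorem stmt_15 {e r : ℕ} (he : 2 ≤ e) (hr : 0 < r) (a : Fin r → ℤ)
    (lam mu : Multipartition r) (n m : ℕ)
    (hn : msize lam = n) (hm : msize mu = m)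
    (hsame : SameHub e a lam mu) :
    (m : ℤ) ≡ (n : ℤ) [ZMOD (e : ℤ)] ∧
      weight e a lam - weight e a mu = (r : ℚ) * ((n : ℚ) - (m : ℚ)) / (e : ℚ) := by
  have he0 : e ≠ 0 := by omega
  obtain ⟨d, hd⟩ := hsame.exists_nodeCount_eq_add he0
  have hnm : (n : ℤ) = m + e * d := by
    rw [← hn, ← hm, msize_eq_add_of_nodeCount_eq_add he0 hd]
  constructor
  · exact Int.modEq_iff_dvd.2 ⟨d, by rw [hnm, add_sub_cancel_left]⟩
  · have hnm_rat : (n : ℚ) - m = e * d := by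
      rw [sub_eq_iff_eq_add']
      exact_mod_cast hnm
    have he_rat : (e : ℚ) ≠ 0 := Nat.cast_ne_zero.2 he0
    rw [weight_sub_weight_of_nodeCount_eq_add hd, hnm_rat]
    field_simp

end AK
end
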